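/- arXiv:1707.03507 — 3 statements merged into one kernel-verified Lean document; each statement's English description precedes it below -/
import Mathlib

section
/- Every 2-regular simple graph admits an antimagic orientation. That is, if G is a finite simple graph in which every vertex has degree exactly 2 (equivalently, G is a disjoint union of cycles), then there exist an orientation D of G and a bijection c from the arc set of D to {1, 2, …, m} (where m is the number of edges of G) such that the vertex-sums of all vertices of D under c are pairwise distinct. -/
open Finset

/-- `A` is an orientation of the simple graph `G`: every edge of `G` receives exactly one
direction, and every arc of `A` comes from an edge of `G`. -/
def IsOrientation {V : Type*} (G : SimpleGraph V) (A : Finset (V × V)) : Prop :=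
  (∀ u v : V, G.Adj u v ↔ ((u, v) ∈ A ∨ (v, u) ∈ A)) ∧
    ∀ u v : V, ¬((u, v) ∈ A ∧ (v, u) ∈ A)

/-- The vertex-sum of `u` for the arc-labeling `c`: the sum of labels of arcs entering `u`
minus the sum of labels of arcs leaving `u`. -/
def vertexSum {V : Type*} [DecidableEq V] (A : Finset (V × V)) (c : V × V → ℤ) (u : V) : ℤ :=
  (∑ a ∈ A.filter (fun a => a.2 = u), c a) - ∑ a ∈ A.filter (fun a => a.1 = u), c a

/-!
Label each edge `e` of a disjoint union of directed cycles by a nonzero integer `x e` such that the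
absolute values are `1, …, m`; reversing the edges with a negative label turns the vertex-sum at the
head of `e` into `x e - x e'`, where `e'` is the edge following `e`. Let the signs alternate along
each cycle, starting with `+`. All vertices then have vertex-sum plus or minus the sum of two
labels, except for one vertex on each odd cycle, whose vertex-sum is a difference of two labels.

Sort the cycles, odd ones first and long ones before short ones of the same parity, and choose on
each cycle a start: an edge if the cycle is even, the exceptional vertex if it is odd. The labels
are given out in rounds over all cycles of one parity, moving away from the start alternately on
its two sides. Of two vertices with equal sign, the one farther from its start, or at the same
distance on a later cycle, usually gets the larger labels on both of its edges, so the vertex-sums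
differ.

On an odd cycle the first and the last edge are both at the start, and the differences of their
labels, which are too small to equal any other vertex-sum, must be kept apart. So the first edges
are numbered in the order of the cycles and the last edges in the reverse order, the two
interleaved. This disturbs only the vertices at which the last edges begin, and there the sums are
decreasing instead: from one odd cycle to a later one, the last label drops by more than the label
before it grows.
-/

section CountLE

variable {E α : Type*} [Fintype E] [LinearOrder α] {f : E → α} {a b : α}

/-- The number of elements of `E` whose `f`-value is at most `a`. For injective `f` this numbers
the elements of `E` by `1, 2, …` in the order of their values. -/
def countLE (f : E → α) (a : α) : ℕ := #{e | f e ≤ a}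

theorem countLE_add_card_Ioc (h : a ≤ b) :
    countLE f a + #{e | a < f e ∧ f e ≤ b} = countLE f b := by
  classical
  rw [countLE, countLE, ← card_union_of_disjoint]
  · congr 1
    ext e
    simp only [mem_union, mem_filter, mem_univ, true_and]
    grind
  · exact disjoint_filter.2 fun e _ hle hlt => hle.not_gt hlt.1

theorem countLE_lt_countLE {e : E} (h : a < f e) : countLE f a < countLE f (f e) := by
  rw [← countLE_add_card_Ioc h.le]
  exact Nat.lt_add_of_pos_right <| card_pos.2 ⟨e, by simpa using h⟩

theorem countLE_pos (e : E) : 0 < countLE f (f e) :=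
  card_pos.2 ⟨e, by simp⟩

theorem bijOn_countLE (hf : Function.Injective f) :
    Set.BijOn (fun e => (countLE f (f e) : ℤ)) Set.univ (Set.Icc 1 (Fintype.card E : ℤ)) := by
  have hinj : Function.Injective fun e => (countLE f (f e) : ℤ) := by
    intro d e (hde : (countLE f (f d) : ℤ) = countLE f (f e))
    by_contra hne
    rcases lt_or_gt_of_ne (hf.ne hne) with h | h
    · exact (countLE_lt_countLE h).ne (mod_cast hde)
    · exact (countLE_lt_countLE h).ne' (mod_cast hde)
  have hmaps : ∀ e, (countLE f (f e) : ℤ) ∈ Icc 1 (Fintype.card E : ℤ) := fun e => by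
    rw [mem_Icc]
    exact ⟨mod_cast countLE_pos e, mod_cast card_le_univ _⟩
  refine ⟨fun e _ => by simpa using hmaps e, hinj.injOn, ?_⟩
  simpa using surjOn_of_injOn_of_card_le _ (s := univ) (fun e _ => hmaps e) hinj.injOn (by simp)

end CountLE

/-- A signed labelling `x` of the points of a permutation `σ`, the point `v` standing for the edge
from `v` to `σ v` of a disjoint union of directed cycles: the absolute values of `x` are the labels
`1, 2, …` and the sign of `x v` says whether the edge keeps its direction. The vertex-sum at `σ v`
is then `x v - x (σ v)`. -/
structure IsAntimagicSigning {V : Type*} [Fintype V] (σ : Equiv.Perm V) (x : V → ℤ) : Prop where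
  bijOn_abs : Set.BijOn (fun v => |x v|) Set.univ (Set.Icc 1 (Fintype.card V : ℤ))
  injective_sub : Function.Injective fun v => x v - x (σ v)

theorem IsAntimagicSigning.comp_equiv {V W : Type*} [Fintype V] [Fintype W]
    {σ : Equiv.Perm V} {τ : Equiv.Perm W} {x : W → ℤ} (hx : IsAntimagicSigning τ x) (e : V ≃ W)
    (he : ∀ v, e (σ v) = τ (e v)) : IsAntimagicSigning σ (x ∘ e) where
  bijOn_abs := by
    rw [Fintype.card_congr e]
    exact hx.bijOn_abs.comp (Set.bijOn_univ.2 e.bijective)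
  injective_sub := by
    simpa only [Function.comp_apply, he, Function.comp_def] using hx.injective_sub.comp e.injective

/-- The cyclic shift of each block `Fin (n i)`: the disjoint union of directed cycles of
lengths `n i`. -/
def rotate {ι : Type*} (n : ι → ℕ) : Equiv.Perm (Σ i, Fin (n i)) :=
  Equiv.sigmaCongrRight fun i => finRotate (n i)

theorem val_finRotate {m : ℕ} (j : Fin m) : (finRotate m j : ℕ) = (j + 1) % m := by
  have : NeZero m := j.neZero
  simp [Fin.val_add]

theorem rotate_mk {ι : Type*} {n : ι → ℕ} {i : ι} {j : ℕ} (h : j < n i) :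
    rotate n ⟨i, j, h⟩ = ⟨i, (j + 1) % n i, Nat.mod_lt _ (by omega)⟩ :=
  congrArg (Sigma.mk i) (Fin.ext (val_finRotate _))

section Labelling

variable {K : ℕ} {n : Fin K → ℕ} {i i' : Fin K} {j j' : ℕ} {k : ℕ}

/-- The lengths of `K` cycles, sorted so that the `k` odd ones come first and the lengths of equal
parity are nonincreasing. Cycle `i` has its edges at the positions `0, …, n i - 1`. -/
structure OddFirst (n : Fin K → ℕ) (k : ℕ) : Prop where
  two_le : ∀ i, 2 ≤ n i
  le_card : k ≤ K
  odd_iff : ∀ i, Odd (n i) ↔ (i : ℕ) < k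
  anti : ∀ i i', i < i' → (Odd (n i) ↔ Odd (n i')) → n i' ≤ n i

/-- The round in which position `j` of a cycle of length `n` is labelled. The rounds follow the
positions `0, 1, 2, …` at even times and `2 * (n / 2) - 1, 2 * (n / 2) - 2, …` at odd times, meeting
halfway. Position `2 * (n / 2)` belongs to round `0`: in an odd cycle it is the last edge, and in an
even cycle it wraps around to position `0`. -/
def stage (n j : ℕ) : ℕ :=
  if j < n / 2 then 2 * j else if j < 2 * (n / 2) then 2 * (2 * (n / 2) - j) + 1 else 0

/-- The sort key of position `j` of cycle `i`: odd cycles first, then by `stage`, then by `i`. The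
last component is doubled to make room for the last edges of the odd cycles, which are interleaved
with the first ones in the opposite order. -/
def edgeKey (n : Fin K → ℕ) (k : ℕ) (i : Fin K) (j : ℕ) : ℕ ×ₗ ℕ ×ₗ ℕ :=
  toLex ((n i + 1) % 2, toLex (stage (n i) j,
    if i < k ∧ 2 * (n i / 2) ≤ j then 2 * (k - i) - 1 else 2 * i))

/-- The label of position `j` of cycle `i`: the rank of its key among the keys of all edges. -/
def edgeLabel (n : Fin K → ℕ) (k : ℕ) (i : Fin K) (j : ℕ) : ℕ :=
  countLE (fun e : Σ i, Fin (n i) => edgeKey n k e.1 e.2) (edgeKey n k i j)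

theorem OddFirst.injective_edgeKey (h : OddFirst n k) :
    Function.Injective fun e : Σ i, Fin (n i) => edgeKey n k e.1 e.2 := by
  rintro ⟨i, j, hj⟩ ⟨i', j', hj'⟩ he
  obtain ⟨hp, hs, hi⟩ : (n i + 1) % 2 = (n i' + 1) % 2 ∧ stage (n i) j = stage (n i') j' ∧
      (if i < k ∧ 2 * (n i / 2) ≤ j then 2 * (k - i) - 1 else 2 * (i : ℕ)) =
      if i' < k ∧ 2 * (n i' / 2) ≤ j' then 2 * (k - i') - 1 else 2 * (i' : ℕ) := by
    simpa [edgeKey, Prod.ext_iff] using he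
  have hodd := h.odd_iff i
  have hodd' := h.odd_iff i'
  have h2 := h.two_le i
  have h2' := h.two_le i'
  rw [Nat.odd_iff] at hodd hodd'
  obtain rfl : i = i' := by
    ext
    split_ifs at hi <;> omega
  have : j = j' := by
    unfold stage at hs
    split_ifs at hi hs <;> omega
  subst this
  rfl

theorem OddFirst.edgeKey_length (h : OddFirst n k) (hi : Even (n i)) :
    edgeKey n k i (n i) = edgeKey n k i 0 := by
  have hik : ¬ (i : ℕ) < k := by rwa [← h.odd_iff i, Nat.not_odd_iff_even]
  have hstage : stage (n i) (n i) = stage (n i) 0 := by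
    unfold stage
    split_ifs <;> omega
  simp only [edgeKey, hstage, hik, false_and, if_false]

theorem OddFirst.edgeLabel_length (h : OddFirst n k) (hi : Even (n i)) :
    edgeLabel n k i (n i) = edgeLabel n k i 0 := by
  rw [edgeLabel, h.edgeKey_length hi, edgeLabel]

theorem OddFirst.edgeLabel_lt_edgeLabel (h : OddFirst n k)
    (hj' : j' ≤ 2 * (n i' / 2)) (hlt : edgeKey n k i j < edgeKey n k i' j') :
    edgeLabel n k i j < edgeLabel n k i' j' := by
  have h2 := h.two_le i'
  rcases (by omega : j' < n i' ∨ j' = n i') with hjn | rfl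
  · exact countLE_lt_countLE (e := (⟨i', j', hjn⟩ : Σ i, Fin (n i))) hlt
  · have heven : Even (n i') := by rw [Nat.even_iff]; omega
    rw [h.edgeKey_length heven] at hlt
    rw [h.edgeLabel_length heven]
    exact countLE_lt_countLE (e := (⟨i', 0, by omega⟩ : Σ i, Fin (n i))) hlt

/-- The distance from the start of the cycle to the vertex between positions `j` and `j + 1`,
which is called corner `j` when `j < 2 * (n / 2)`. The last corner of the cycle, at
`j = 2 * (n / 2) - 1`, has level `0` like the corner `j = 0`. -/
def cornerLevel (n j : ℕ) : ℕ := min j (2 * (n / 2) - 1 - j)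

/-- The position with the smaller label at corner `j`. -/
def lowEdge (n j : ℕ) : ℕ := if j < n / 2 then j else j + 1

/-- The position with the larger label at corner `j`. -/
def highEdge (n j : ℕ) : ℕ := if j < n / 2 then j + 1 else j

theorem stage_lowEdge (n j : ℕ) :
    stage n (lowEdge n j) = if j < n / 2 then 2 * cornerLevel n j else
      if j + 1 < 2 * (n / 2) then 2 * cornerLevel n j + 1 else 0 := by
  unfold stage lowEdge cornerLevel
  split_ifs <;> omega

theorem stage_highEdge {n j : ℕ} (hj : j < 2 * (n / 2)) :
    stage n (highEdge n j) = if j + 1 < n / 2 then 2 * cornerLevel n j + 2 else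
      2 * cornerLevel n j + 3 := by
  unfold stage highEdge cornerLevel
  split_ifs <;> omega

theorem lt_half_iff_of_cornerLevel_eq {n n' j j' : ℕ} (hj : j < 2 * (n / 2))
    (hj' : j' < 2 * (n' / 2)) (hpar : j % 2 = j' % 2) (ht : cornerLevel n j = cornerLevel n' j') :
    j < n / 2 ↔ j' < n' / 2 := by
  unfold cornerLevel at ht
  omega

/-- The absolute value of the vertex-sum at corner `j` of cycle `i`. -/
def cornerSum (n : Fin K → ℕ) (k : ℕ) (i : Fin K) (j : ℕ) : ℕ :=
  edgeLabel n k i j + edgeLabel n k i (j + 1)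

theorem cornerSum_eq (i : Fin K) (j : ℕ) : cornerSum n k i j =
    edgeLabel n k i (lowEdge (n i) j) + edgeLabel n k i (highEdge (n i) j) := by
  unfold cornerSum lowEdge highEdge
  split_ifs <;> omega

/-- The sort key according to which `cornerSum` increases among corners `j` of equal parity, except
for the last corners of odd cycles. -/
def cornerKey (n : Fin K → ℕ) (i : Fin K) (j : ℕ) : ℕ ×ₗ ℕ ×ₗ ℕ :=
  toLex ((n i + 1) % 2, toLex (cornerLevel (n i) j, (i : ℕ)))

theorem OddFirst.edgeKey_lowEdge_lt (h : OddFirst n k)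
    (hj : j < 2 * (n i / 2)) (hj' : j' < 2 * (n i' / 2)) (hpar : j % 2 = j' % 2)
    (hlast : i < k → i' < k → j + 1 = 2 * (n i / 2) → j' + 1 ≠ 2 * (n i' / 2))
    (hlt : cornerKey n i j < cornerKey n i' j') :
    edgeKey n k i (lowEdge (n i) j) < edgeKey n k i' (lowEdge (n i') j') := by
  have hodd := h.odd_iff i
  have hodd' := h.odd_iff i'
  rw [Nat.odd_iff] at hodd hodd'
  simp only [cornerKey, edgeKey, Prod.Lex.toLex_lt_toLex, stage_lowEdge]
    at hlt ⊢
  rcases hlt with hp | ⟨hp, ht | ⟨ht, hi⟩⟩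
  · exact .inl hp
  · refine .inr ⟨hp, .inl ?_⟩
    unfold cornerLevel at *
    split_ifs <;> omega
  · have hside := lt_half_iff_of_cornerLevel_eq hj hj' hpar ht
    refine .inr ⟨hp, .inr ?_⟩
    unfold lowEdge cornerLevel at *
    split_ifs <;> omega

theorem OddFirst.edgeKey_highEdge_lt (h : OddFirst n k)
    (hj : j < 2 * (n i / 2)) (hj' : j' < 2 * (n i' / 2)) (hpar : j % 2 = j' % 2)
    (hlt : cornerKey n i j < cornerKey n i' j') :
    edgeKey n k i (highEdge (n i) j) < edgeKey n k i' (highEdge (n i') j') := by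
  have hanti := h.anti i i'
  rw [Nat.odd_iff, Nat.odd_iff, Fin.lt_def] at hanti
  simp only [cornerKey, edgeKey, Prod.Lex.toLex_lt_toLex, stage_highEdge hj, stage_highEdge hj']
    at hlt ⊢
  rcases hlt with hp | ⟨hp, ht | ⟨ht, hi⟩⟩
  · exact .inl hp
  · refine .inr ⟨hp, .inl ?_⟩
    split_ifs <;> omega
  · have hside := lt_half_iff_of_cornerLevel_eq hj hj' hpar ht
    refine .inr ⟨hp, ?_⟩
    unfold highEdge cornerLevel at *
    split_ifs <;> omega

theorem lowEdge_le {n j : ℕ} (hj : j < 2 * (n / 2)) : lowEdge n j ≤ 2 * (n / 2) := by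
  unfold lowEdge
  split_ifs <;> omega

theorem highEdge_le {n j : ℕ} (hj : j < 2 * (n / 2)) : highEdge n j ≤ 2 * (n / 2) := by
  unfold highEdge
  split_ifs <;> omega

theorem OddFirst.cornerSum_lt_cornerSum (h : OddFirst n k)
    (hj : j < 2 * (n i / 2)) (hj' : j' < 2 * (n i' / 2)) (hpar : j % 2 = j' % 2)
    (hlast : i < k → i' < k → j + 1 = 2 * (n i / 2) → j' + 1 ≠ 2 * (n i' / 2))
    (hlt : cornerKey n i j < cornerKey n i' j') :
    cornerSum n k i j < cornerSum n k i' j' := by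
  rw [cornerSum_eq, cornerSum_eq]
  exact add_lt_add
    (h.edgeLabel_lt_edgeLabel (lowEdge_le hj') (h.edgeKey_lowEdge_lt hj hj' hpar hlast hlt))
    (h.edgeLabel_lt_edgeLabel (highEdge_le hj') (h.edgeKey_highEdge_lt hj hj' hpar hlt))

theorem OddFirst.edgeKey_zero (h : OddFirst n k) (hi : i < k) :
    edgeKey n k i 0 = toLex (0, toLex (0, 2 * (i : ℕ))) := by
  have hodd := Nat.odd_iff.1 ((h.odd_iff i).2 hi)
  have h2 := h.two_le i
  simp only [edgeKey, stage]
  rw [if_pos (by omega), if_neg (by omega), (by omega : (n i + 1) % 2 = 0), mul_zero]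

theorem OddFirst.edgeKey_penultimate (h : OddFirst n k) (hi : i < k) :
    edgeKey n k i (n i - 2) = toLex (0, toLex (3, 2 * (i : ℕ))) := by
  have hodd := Nat.odd_iff.1 ((h.odd_iff i).2 hi)
  have h2 := h.two_le i
  simp only [edgeKey, stage]
  rw [if_neg (by omega), if_pos (by omega), if_neg (by omega), (by omega : (n i + 1) % 2 = 0),
    (by omega : 2 * (2 * (n i / 2) - (n i - 2)) + 1 = 3)]

theorem OddFirst.edgeKey_last (h : OddFirst n k) (hi : i < k) :
    edgeKey n k i (n i - 1) = toLex (0, toLex (0, 2 * (k - (i : ℕ)) - 1)) := by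
  have hodd := Nat.odd_iff.1 ((h.odd_iff i).2 hi)
  have h2 := h.two_le i
  simp only [edgeKey, stage]
  rw [if_neg (by omega), if_neg (by omega), if_pos (by omega), (by omega : (n i + 1) % 2 = 0)]

theorem OddFirst.edgeLabel_penultimate_le (h : OddFirst n k) (hi : i < i') (hi' : i' < k) :
    edgeLabel n k i' (n i' - 2) ≤ edgeLabel n k i (n i - 2) + (i' - i) := by
  have hlt : (i : ℕ) < i' := hi
  have hn (a : Fin K) : n a - 2 < n a := Nat.sub_lt_self two_pos (h.two_le a)
  have hsub : ({e : Σ i, Fin (n i) | edgeKey n k i (n i - 2) < edgeKey n k e.1 e.2 ∧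
      edgeKey n k e.1 e.2 ≤ edgeKey n k i' (n i' - 2)} : Finset _) ⊆
      (Ioc i i').image fun a => ⟨a, n a - 2, hn a⟩ := by
    rintro ⟨a, j, hj⟩ he
    rw [mem_filter_univ, h.edgeKey_penultimate (hlt.trans hi'), h.edgeKey_penultimate hi'] at he
    simp only [edgeKey, Prod.Lex.toLex_lt_toLex, Prod.Lex.toLex_le_toLex] at he
    have hstage : stage (n a) j = 3 := by omega
    obtain rfl : j = n a - 2 := by
      unfold stage at hstage
      split_ifs at hstage <;> omega
    have h2 := h.two_le a
    rw [if_neg (by omega)] at he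
    refine mem_image.2 ⟨a, ?_, rfl⟩
    rw [mem_Ioc, Fin.lt_def, Fin.le_def]
    omega
  have hcard := (card_le_card hsub).trans card_image_le
  rw [Fin.card_Ioc] at hcard
  unfold edgeLabel
  rw [← countLE_add_card_Ioc (a := edgeKey n k i (n i - 2))]
  · exact Nat.add_le_add_left hcard _
  · rw [h.edgeKey_penultimate (hlt.trans hi'), h.edgeKey_penultimate hi']
    simp only [Prod.Lex.toLex_le_toLex, lt_self_iff_false, false_or, true_and]
    omega

theorem OddFirst.edgeLabel_last_add_lt (h : OddFirst n k) (hi : i < i') (hi' : i' < k) :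
    edgeLabel n k i' (n i' - 1) + (i' - i) < edgeLabel n k i (n i - 1) := by
  have hlt : (i : ℕ) < i' := hi
  have hn (a : Fin K) : 0 < n a - 1 ∧ n a - 1 < n a := by have := h.two_le a; omega
  -- The drop exceeds `i' - i` by one because the first edge of cycle `k - i'` is also in between.
  let first : Fin K := ⟨k - i', by have := h.le_card; omega⟩
  have hfirst : (first : ℕ) < k := by simp only [first]; omega
  let last (a : Fin K) : Σ i, Fin (n i) := ⟨a, n a - 1, (hn a).2⟩
  have hsub : insert ⟨first, 0, by have := hn first; omega⟩ ((Ico i i').image last) ⊆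
      ({e : Σ i, Fin (n i) | edgeKey n k i' (n i' - 1) < edgeKey n k e.1 e.2 ∧
        edgeKey n k e.1 e.2 ≤ edgeKey n k i (n i - 1)} : Finset _) := by
    intro e he
    rw [mem_filter_univ, h.edgeKey_last (hlt.trans hi'), h.edgeKey_last hi']
    rcases mem_insert.1 he with rfl | he
    · simp only [h.edgeKey_zero hfirst, Prod.Lex.toLex_lt_toLex, Prod.Lex.toLex_le_toLex,
        lt_self_iff_false, false_or, true_and, first]
      omega
    · obtain ⟨a, ha, rfl⟩ := mem_image.1 he
      rw [mem_Ico, Fin.le_def, Fin.lt_def] at ha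
      simp only [last, h.edgeKey_last (ha.2.trans hi'), Prod.Lex.toLex_lt_toLex,
        Prod.Lex.toLex_le_toLex, lt_self_iff_false, false_or, true_and]
      omega
  have hcard := card_le_card hsub
  rw [card_insert_of_notMem, card_image_of_injective, Fin.card_Ico] at hcard
  · unfold edgeLabel
    rw [← countLE_add_card_Ioc (a := edgeKey n k i' (n i' - 1)) (b := edgeKey n k i (n i - 1))]
    · omega
    · rw [h.edgeKey_last (hlt.trans hi'), h.edgeKey_last hi']
      simp only [Prod.Lex.toLex_le_toLex, lt_self_iff_false, false_or, true_and]
      omega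
  · exact fun a b hab => congrArg Sigma.fst hab
  · simp only [mem_image, not_exists, not_and]
    rintro a - hlast
    have hval := congrArg (fun e : Σ i, Fin (n i) => (e.2 : ℕ)) hlast
    exact (hn a).1.ne' hval

theorem OddFirst.cornerSum_last_lt (h : OddFirst n k) (hi : i < i') (hi' : i' < k) :
    cornerSum n k i' (n i' - 2) < cornerSum n k i (n i - 2) := by
  have := h.edgeLabel_penultimate_le hi hi'
  have := h.edgeLabel_last_add_lt hi hi'
  have := h.two_le i
  have := h.two_le i'
  rw [cornerSum, cornerSum, (by omega : n i - 2 + 1 = n i - 1),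
    (by omega : n i' - 2 + 1 = n i' - 1)]
  omega

theorem OddFirst.cornerSum_ne_cornerSum (h : OddFirst n k)
    (hj : j < 2 * (n i / 2)) (hj' : j' < 2 * (n i' / 2)) (hpar : j % 2 = j' % 2)
    (hne : i = i' → j ≠ j') : cornerSum n k i j ≠ cornerSum n k i' j' := by
  wlog hlt : cornerKey n i j < cornerKey n i' j' generalizing i i' j j'
  · refine (this hj' hj hpar.symm (fun hi hj => hne hi.symm hj.symm) ?_).symm
    refine (not_lt.1 hlt).lt_of_ne fun heq => ?_
    obtain ⟨-, ht, hi⟩ : (n i' + 1) % 2 = (n i + 1) % 2 ∧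
        cornerLevel (n i') j' = cornerLevel (n i) j ∧ i' = i := by
      simpa [cornerKey, Prod.ext_iff, Fin.ext_iff] using heq
    subst hi
    have := lt_half_iff_of_cornerLevel_eq hj hj' hpar ht.symm
    have := hne rfl
    unfold cornerLevel at ht
    omega
  by_cases hlast : i < k ∧ i' < k ∧ j + 1 = 2 * (n i / 2) ∧ j' + 1 = 2 * (n i' / 2)
  · obtain ⟨hi, hi', hlast, hlast'⟩ := hlast
    have hodd := Nat.odd_iff.1 ((h.odd_iff i).2 hi)
    have hodd' := Nat.odd_iff.1 ((h.odd_iff i').2 hi')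
    obtain rfl : j = n i - 2 := by omega
    obtain rfl : j' = n i' - 2 := by omega
    rcases lt_trichotomy i i' with hii | rfl | hii
    · exact (h.cornerSum_last_lt hii hi').ne'
    · exact absurd rfl (hne rfl)
    · exact (h.cornerSum_last_lt hii hi).ne
  · exact (h.cornerSum_lt_cornerSum hj hj' hpar (by tauto) hlt).ne

/-- The vertex-sum at the vertex of the odd cycle `i` that joins its last edge to its first one.
Both of these edges have a positive sign, so one enters the vertex and the other leaves it. -/
def passSum (n : Fin K → ℕ) (k : ℕ) (i : Fin K) : ℤ :=
  edgeLabel n k i (n i - 1) - edgeLabel n k i 0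

theorem OddFirst.passSum_lt_passSum (h : OddFirst n k) (hi : i < i') (hi' : i' < k) :
    passSum n k i' < passSum n k i := by
  have hfirst : edgeLabel n k i 0 < edgeLabel n k i' 0 := by
    refine h.edgeLabel_lt_edgeLabel (Nat.zero_le _) ?_
    have hlt : (i : ℕ) < i' := hi
    rw [h.edgeKey_zero (hlt.trans hi'), h.edgeKey_zero hi']
    simp only [Prod.Lex.toLex_lt_toLex, lt_self_iff_false, false_or, true_and]
    omega
  have := h.edgeLabel_last_add_lt hi hi'
  unfold passSum
  omega

theorem OddFirst.abs_passSum_lt_cornerSum (h : OddFirst n k) (hi : i < k)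
    (hj' : j' < 2 * (n i' / 2)) : |passSum n k i| < cornerSum n k i' j' := by
  have hkey (m : ℕ) : toLex (0, toLex (0, m)) < edgeKey n k i' (highEdge (n i') j') := by
    simp only [edgeKey, Prod.Lex.toLex_lt_toLex, stage_highEdge hj']
    split_ifs <;> omega
  have hfirst : edgeLabel n k i 0 < edgeLabel n k i' (highEdge (n i') j') :=
    h.edgeLabel_lt_edgeLabel (highEdge_le hj') (h.edgeKey_zero hi ▸ hkey _)
  have hlast : edgeLabel n k i (n i - 1) < edgeLabel n k i' (highEdge (n i') j') :=
    h.edgeLabel_lt_edgeLabel (highEdge_le hj') (h.edgeKey_last hi ▸ hkey _)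
  rw [cornerSum_eq, passSum, abs_lt]
  omega

theorem neg_one_pow_mul_natCast_inj {a b j j' : ℕ} (ha : 0 < a)
    (h : (-1 : ℤ) ^ j * a = (-1) ^ j' * b) : j % 2 = j' % 2 ∧ a = b := by
  have hab : a = b := by simpa [Int.natAbs_mul, Int.natAbs_pow] using congrArg Int.natAbs h
  subst hab
  have hsign : (-1 : ℤ) ^ j = (-1) ^ j' := mul_right_cancel₀ (by omega) h
  have heven : Even j ↔ Even j' := by
    rw [← neg_one_pow_eq_one_iff_even (by decide : (-1 : ℤ) ≠ 1), hsign,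
      neg_one_pow_eq_one_iff_even (by decide)]
  rw [Nat.even_iff, Nat.even_iff] at heven
  omega

/-- The labelling with the sign `(-1) ^ j` at position `j` of each cycle; a negative sign means that
the edge is reversed. -/
def signedLabel (n : Fin K → ℕ) (k : ℕ) (e : Σ i, Fin (n i)) : ℤ :=
  (-1) ^ (e.2 : ℕ) * edgeLabel n k e.1 e.2

theorem edgeLabel_pos (hj : j < n i) : 0 < edgeLabel n k i j :=
  countLE_pos (⟨i, j, hj⟩ : Σ i, Fin (n i))

theorem OddFirst.signedLabel_sub_rotate_eq_cornerSum (h : OddFirst n k) (hj : j < n i)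
    (hcorner : j < 2 * (n i / 2)) :
    signedLabel n k ⟨i, j, hj⟩ - signedLabel n k (rotate n ⟨i, j, hj⟩) =
      (-1) ^ j * (cornerSum n k i j : ℤ) := by
  rw [rotate_mk]
  simp only [signedLabel, cornerSum, Nat.cast_add]
  rcases (by omega : j + 1 < n i ∨ j + 1 = n i) with hlt | heq
  · rw [Nat.mod_eq_of_lt hlt, pow_succ]
    ring
  · have heven : Even (n i) := by rw [Nat.even_iff]; omega
    have hodd : Odd j := by rw [Nat.odd_iff]; omega
    rw [heq, Nat.mod_self, h.edgeLabel_length heven, hodd.neg_one_pow, pow_zero]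
    ring

theorem signedLabel_sub_rotate_eq_passSum (hj : j < n i) (hpass : ¬ j < 2 * (n i / 2)) :
    signedLabel n k ⟨i, j, hj⟩ - signedLabel n k (rotate n ⟨i, j, hj⟩) = passSum n k i := by
  obtain rfl : j = n i - 1 := by omega
  have heven : Even (n i - 1) := by rw [Nat.even_iff]; omega
  rw [rotate_mk]
  simp only [signedLabel, passSum, (by omega : n i - 1 + 1 = n i), Nat.mod_self,
    heven.neg_one_pow, pow_zero, one_mul]

theorem OddFirst.injective_signedLabel_sub_rotate (h : OddFirst n k) :
    Function.Injective fun e => signedLabel n k e - signedLabel n k (rotate n e) := by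
  have pass_lt {i : Fin K} {j : ℕ} (hj : j < n i) (hpass : ¬ j < 2 * (n i / 2)) : i < k :=
    (h.odd_iff i).1 (by rw [Nat.odd_iff]; omega)
  have pos {i : Fin K} {j : ℕ} (hj : j < n i) : 0 < cornerSum n k i j :=
    Nat.add_pos_left (edgeLabel_pos hj) _
  have pass_ne {i i' : Fin K} {j' : ℕ} (hi : i < k) (hcorner' : j' < 2 * (n i' / 2)) :
      passSum n k i ≠ (-1) ^ j' * (cornerSum n k i' j' : ℤ) := by
    intro heq
    simpa [heq, abs_mul] using h.abs_passSum_lt_cornerSum hi hcorner'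
  rintro ⟨i, j, hj⟩ ⟨i', j', hj'⟩ heq
  simp only at heq
  by_cases hcorner : j < 2 * (n i / 2) <;> by_cases hcorner' : j' < 2 * (n i' / 2)
  · rw [h.signedLabel_sub_rotate_eq_cornerSum hj hcorner,
      h.signedLabel_sub_rotate_eq_cornerSum hj' hcorner'] at heq
    obtain ⟨hpar, hsum⟩ := neg_one_pow_mul_natCast_inj (pos hj) heq
    by_contra hne
    refine h.cornerSum_ne_cornerSum hcorner hcorner' hpar ?_ hsum
    rintro rfl rfl
    exact hne rfl
  · rw [h.signedLabel_sub_rotate_eq_cornerSum hj hcorner,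
      signedLabel_sub_rotate_eq_passSum hj' hcorner'] at heq
    exact (pass_ne (pass_lt hj' hcorner') hcorner heq.symm).elim
  · rw [signedLabel_sub_rotate_eq_passSum hj hcorner,
      h.signedLabel_sub_rotate_eq_cornerSum hj' hcorner'] at heq
    exact (pass_ne (pass_lt hj hcorner) hcorner' heq).elim
  · rw [signedLabel_sub_rotate_eq_passSum hj hcorner,
      signedLabel_sub_rotate_eq_passSum hj' hcorner'] at heq
    rcases lt_trichotomy i i' with hi | rfl | hi
    · exact absurd heq (h.passSum_lt_passSum hi (pass_lt hj' hcorner')).ne'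
    · obtain rfl : j = j' := by omega
      rfl
    · exact absurd heq (h.passSum_lt_passSum hi (pass_lt hj hcorner)).ne

theorem OddFirst.isAntimagicSigning_signedLabel (h : OddFirst n k) :
    IsAntimagicSigning (rotate n) (signedLabel n k) where
  bijOn_abs := by
    simpa [signedLabel, abs_mul, abs_pow, edgeLabel] using bijOn_countLE h.injective_edgeKey
  injective_sub := h.injective_signedLabel_sub_rotate

end Labelling

theorem iff_lt_card_filter_of_antitone {K : ℕ} {P : Fin K → Prop} [DecidablePred P]
    (hP : Antitone P) (i : Fin K) : P i ↔ (i : ℕ) < #{j | P j} := by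
  constructor
  · intro hi
    have hsub : Iic i ⊆ ({j | P j} : Finset _) := fun j hj => by
      simpa using hP (mem_Iic.1 hj) hi
    simpa [Fin.card_Iic, Nat.succ_le_iff] using card_le_card hsub
  · contrapose!
    intro hi
    have hsub : ({j | P j} : Finset _) ⊆ Iio i := fun j hj => by
      rw [mem_Iio]
      by_contra! hij
      exact hi (hP hij (by simpa using hj))
    simpa [Fin.card_Iio] using card_le_card hsub

theorem exists_equiv_oddFirst {ι : Type*} [Fintype ι] {n : ι → ℕ} (hn : ∀ i, 2 ≤ n i) :
    ∃ (k : ℕ) (e : Fin (Fintype.card ι) ≃ ι), OddFirst (n ∘ e) k := by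
  let f (i : ι) : ℕ ×ₗ ℕᵒᵈ := toLex ((n i + 1) % 2, OrderDual.toDual (n i))
  let e₀ := (Fintype.equivFin ι).symm
  let e := (Tuple.sort (f ∘ e₀)).trans e₀
  have hmono : Monotone (f ∘ e) := Tuple.monotone_sort (f ∘ e₀)
  have hlex {i j : Fin (Fintype.card ι)} (hij : i ≤ j) : (n (e i) + 1) % 2 < (n (e j) + 1) % 2 ∨
      (n (e i) + 1) % 2 = (n (e j) + 1) % 2 ∧ n (e j) ≤ n (e i) := by
    simpa [f, Prod.Lex.toLex_le_toLex] using hmono hij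
  have hodd : Antitone fun i => Odd (n (e i)) := by
    intro i j hij
    simp only [le_Prop_eq, Nat.odd_iff]
    have := hlex hij
    omega
  refine ⟨#{i | Odd (n (e i))}, e, fun i => hn _, ?_, iff_lt_card_filter_of_antitone hodd, ?_⟩
  · simpa using card_le_univ ({i | Odd (n (e i))} : Finset (Fin (Fintype.card ι)))
  · intro i j hij hpar
    have := hlex hij.le
    simp only [Function.comp_apply, Nat.odd_iff] at hpar ⊢
    omega

theorem exists_isAntimagicSigning_rotate {ι : Type*} [Fintype ι] {n : ι → ℕ}
    (hn : ∀ i, 2 ≤ n i) : ∃ x, IsAntimagicSigning (rotate n) x := by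
  obtain ⟨k, e, h⟩ := exists_equiv_oddFirst hn
  let e' : (Σ i, Fin (n (e i))) ≃ Σ i, Fin (n i) :=
    Equiv.sigmaCongrLeft (β := fun i => Fin (n i)) e
  refine ⟨_, h.isAntimagicSigning_signedLabel.comp_equiv e'.symm fun v => ?_⟩
  obtain ⟨p, rfl⟩ := e'.surjective v
  rw [Equiv.symm_apply_eq, Equiv.symm_apply_apply]
  rfl

section Graph

variable {V : Type*} {G : SimpleGraph V}

theorem exists_equiv_fin_of_isRegularOfDegree_two [G.LocallyFinite] [Finite V]
    (hG : G.IsRegularOfDegree 2) (c : G.ConnectedComponent) :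
    ∃ (m : ℕ) (e : Fin m ≃ {v // G.connectedComponentMk v = c}),
      3 ≤ m ∧ ∀ j, G.Adj (e j) (e (finRotate m j)) := by
  obtain ⟨v, rfl⟩ := c.exists_rep
  have hcycles : G.IsCycles := fun v _ => by
    rw [← Nat.card_coe_set_eq, Nat.card_eq_fintype_card, G.card_neighborSet_eq_degree, hG v]
  have hne : (G.neighborSet v).Nonempty :=
    (G.degree_pos_iff_exists_adj v).1 (by rw [hG v]; exact two_pos)
  obtain ⟨p, hp, hverts⟩ := hcycles.exists_cycle_toSubgraph_verts_eq_connectedComponentSupp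
    (c := G.connectedComponentMk v) rfl hne
  have hsupp (u : V) : G.connectedComponentMk u = G.connectedComponentMk v ↔ u ∈ p.support := by
    rw [← SimpleGraph.ConnectedComponent.mem_supp_iff, ← hverts, p.mem_verts_toSubgraph]
  have h3 := hp.three_le_length
  let f (j : Fin p.length) : {u // G.connectedComponentMk u = G.connectedComponentMk v} :=
    ⟨p.getVert j, (hsupp _).2 (p.getVert_mem_support _)⟩
  have hf : f.Bijective := by
    constructor
    · intro i j hij
      exact Fin.ext (hp.getVert_injOn' (by grind) (by grind) (congrArg Subtype.val hij))
    · rintro ⟨u, hu⟩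
      obtain ⟨j, rfl, hj⟩ := SimpleGraph.Walk.mem_support_iff_exists_getVert.1 ((hsupp u).1 hu)
      rcases hj.lt_or_eq with hj | rfl
      · exact ⟨⟨j, hj⟩, rfl⟩
      · exact ⟨⟨0, by omega⟩, Subtype.ext (by simp [f])⟩
  refine ⟨p.length, Equiv.ofBijective f hf, h3, fun j => ?_⟩
  have hnext : p.getVert (finRotate p.length j) = p.getVert (j + 1) := by
    rw [val_finRotate]
    rcases (by omega : (j : ℕ) + 1 < p.length ∨ (j : ℕ) + 1 = p.length) with hj | hj
    · rw [Nat.mod_eq_of_lt hj]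
    · rw [hj, Nat.mod_self, p.getVert_zero, p.getVert_length]
  have hadj := p.adj_getVert_succ j.2
  rwa [← hnext] at hadj

theorem exists_equiv_rotate_of_isRegularOfDegree_two [G.LocallyFinite] [Finite V]
    (hG : G.IsRegularOfDegree 2) :
    ∃ (n : G.ConnectedComponent → ℕ) (e : V ≃ Σ c, Fin (n c)), (∀ c, 3 ≤ n c) ∧
      ∀ v, G.Adj v (e.symm (rotate n (e v))) := by
  choose n e hn hadj using exists_equiv_fin_of_isRegularOfDegree_two hG
  refine ⟨n, ((Equiv.sigmaCongrRight e).trans (Equiv.sigmaFiberEquiv G.connectedComponentMk)).symm,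
    hn, fun v => ?_⟩
  obtain ⟨⟨c, j⟩, rfl⟩ := ((Equiv.sigmaCongrRight e).trans
    (Equiv.sigmaFiberEquiv G.connectedComponentMk)).surjective v
  rw [Equiv.symm_apply_apply, Equiv.symm_symm]
  exact hadj c j

theorem rotate_rotate_ne {ι : Type*} {n : ι → ℕ} (hn : ∀ i, 3 ≤ n i) (v : Σ i, Fin (n i)) :
    rotate n (rotate n v) ≠ v := by
  obtain ⟨i, j, hj⟩ := v
  have h3 := hn i
  rw [rotate_mk, rotate_mk]
  simp only [ne_eq, Sigma.mk.injEq, heq_eq_eq, Fin.mk.injEq, true_and]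
  rcases (by omega : j + 1 < n i ∨ j + 1 = n i) with hlt | heq
  · rw [Nat.mod_eq_of_lt hlt]
    rcases (by omega : j + 1 + 1 < n i ∨ j + 1 + 1 = n i) with hlt | heq
    · rw [Nat.mod_eq_of_lt hlt]
      omega
    · rw [heq, Nat.mod_self]
      omega
  · rw [heq, Nat.mod_self, Nat.mod_eq_of_lt (by omega)]
    omega

theorem adj_iff_of_isRegularOfDegree_two [G.LocallyFinite] (hG : G.IsRegularOfDegree 2)
    {σ : Equiv.Perm V} (hσ : ∀ v, σ (σ v) ≠ v) (hadj : ∀ v, G.Adj v (σ v)) (u v : V) :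
    G.Adj u v ↔ σ u = v ∨ σ v = u := by
  classical
  have hsub : {σ u, σ.symm u} ⊆ G.neighborFinset u := by
    simp only [insert_subset_iff, singleton_subset_iff, G.mem_neighborFinset]
    exact ⟨hadj u, by simpa using (hadj (σ.symm u)).symm⟩
  have hne : σ u ≠ σ.symm u := fun h => hσ u (by rw [h, σ.apply_symm_apply])
  have heq := eq_of_subset_of_card_le hsub
    (by rw [card_pair hne, G.card_neighborFinset_eq_degree, hG u])
  rw [← G.mem_neighborFinset, ← heq, mem_insert, mem_singleton, Equiv.eq_symm_apply,
    eq_comm (a := v)]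

end Graph

section Orientation

variable {V : Type*} {σ : Equiv.Perm V} {x : V → ℤ}

/-- The arc carrying the edge from `v` to `σ v`, reversed when `x v` is not positive. -/
def signedArc (σ : Equiv.Perm V) (x : V → ℤ) (v : V) : V × V :=
  if 0 < x v then (v, σ v) else (σ v, v)

theorem signedArc_injective (hσ : ∀ v, σ (σ v) ≠ v) : Function.Injective (signedArc σ x) := by
  intro u v huv
  have := hσ u
  have := hσ v
  unfold signedArc at huv
  grind

variable [Fintype V] [DecidableEq V]

theorem mem_image_signedArc {u v : V} :
    (u, v) ∈ univ.image (signedArc σ x) ↔ (σ u = v ∧ 0 < x u) ∨ (σ v = u ∧ ¬ 0 < x v) := by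
  simp only [mem_image, mem_univ, true_and, signedArc]
  grind

theorem isOrientation_image_signedArc {G : SimpleGraph V} (hσ : ∀ v, σ (σ v) ≠ v)
    (hG : ∀ u v, G.Adj u v ↔ σ u = v ∨ σ v = u) :
    IsOrientation G (univ.image (signedArc σ x)) := by
  refine ⟨fun u v => ?_, fun u v => ?_⟩
  · rw [hG, mem_image_signedArc, mem_image_signedArc]
    tauto
  · rw [mem_image_signedArc, mem_image_signedArc]
    have := hσ u
    grind

theorem vertexSum_image_signedArc (hσ : ∀ v, σ (σ v) ≠ v) {c : V × V → ℤ}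
    (hc : ∀ v, c (signedArc σ x v) = |x v|) (v : V) :
    vertexSum (univ.image (signedArc σ x)) c (σ v) = x v - x (σ v) := by
  have harc (w : V) : ((if (signedArc σ x w).2 = σ v then c (signedArc σ x w) else 0) -
      if (signedArc σ x w).1 = σ v then c (signedArc σ x w) else 0) =
      (if w = v then x w else 0) - if w = σ v then x w else 0 := by
    have hinj : σ w = σ v ↔ w = v := σ.injective.eq_iff
    have := hσ v
    rw [hc]
    by_cases hw : 0 < x w
    · simp [signedArc, hw, hinj, abs_of_pos hw]
    · simp only [signedArc, hw, if_false, hinj, abs_of_nonpos (not_lt.1 hw)]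
      split_ifs <;> omega
  rw [vertexSum, sum_filter, sum_filter, sum_image (signedArc_injective hσ).injOn,
    sum_image (signedArc_injective hσ).injOn, ← sum_sub_distrib, sum_congr rfl fun w _ => harc w]
  simp

theorem IsAntimagicSigning.exists_antimagic_orientation (hx : IsAntimagicSigning σ x)
    (hσ : ∀ v, σ (σ v) ≠ v) {G : SimpleGraph V} (hG : ∀ u v, G.Adj u v ↔ σ u = v ∨ σ v = u) :
    ∃ (A : Finset (V × V)) (c : V × V → ℤ), IsOrientation G A ∧
      Set.BijOn c ↑A (Set.Icc 1 (Fintype.card V : ℤ)) ∧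
      Pairwise fun u v : V => vertexSum A c u ≠ vertexSum A c v := by
  have harc := signedArc_injective (x := x) hσ
  let c := Function.extend (signedArc σ x) (fun v => |x v|) 0
  have hc : ∀ v, c (signedArc σ x v) = |x v| := harc.extend_apply _ _
  refine ⟨univ.image (signedArc σ x), c, isOrientation_image_signedArc hσ hG, ?_, ?_⟩
  · have hbij : Set.BijOn (c ∘ signedArc σ x) Set.univ (Set.Icc 1 (Fintype.card V : ℤ)) :=
      hx.bijOn_abs.congr fun v _ => (hc v).symm
    rw [coe_image, coe_univ]
    refine ⟨Set.mapsTo_image_iff.2 hbij.mapsTo, hbij.injOn.image_of_comp, ?_⟩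
    rw [Set.SurjOn, ← Set.image_comp, hbij.image_eq]
  · intro u v huv hsum
    obtain ⟨u, rfl⟩ := σ.surjective u
    obtain ⟨v, rfl⟩ := σ.surjective v
    rw [vertexSum_image_signedArc hσ hc, vertexSum_image_signedArc hσ hc] at hsum
    exact huv (congrArg σ (hx.injective_sub hsum))

end Orientation

/-- Every 2-regular simple graph admits an antimagic orientation. -/
theorem every_two_regular_graph_admits_antimagic_orientation
    {V : Type*} [Fintype V] [DecidableEq V]
    (G : SimpleGraph V) [DecidableRel G.Adj]
    (hreg : ∀ v : V, G.degree v = 2) :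
    ∃ (A : Finset (V × V)) (c : V × V → ℤ),
      IsOrientation G A ∧
      Set.BijOn c ↑A (Set.Icc 1 (G.edgeFinset.card : ℤ)) ∧
      Pairwise fun u v : V => vertexSum A c u ≠ vertexSum A c v := by
  have hcard : G.edgeFinset.card = Fintype.card V := by
    have h := G.sum_degrees_eq_twice_card_edges
    simp only [hreg, sum_const, smul_eq_mul, card_univ] at h
    omega
  obtain ⟨n, e, hn, hadj⟩ := exists_equiv_rotate_of_isRegularOfDegree_two (G := G) hreg
  obtain ⟨x, hx⟩ := exists_isAntimagicSigning_rotate fun c => (Nat.le_succ 2).trans (hn c)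
  let σ : Equiv.Perm V := e.symm.permCongr (rotate n)
  have hσ (v : V) : σ (σ v) ≠ v := by
    simpa [σ, Equiv.symm_apply_eq] using rotate_rotate_ne hn (e v)
  rw [hcard]
  exact (hx.comp_equiv e fun v => by simp [σ]).exists_antimagic_orientation hσ
    (adj_iff_of_isRegularOfDegree_two hreg hσ hadj)
end

section
/- Let d ≥ 2 be an integer and let G be a 2d-regular simple graph (not necessarily connected). If G has at most two odd components, i.e., at most two connected components with an odd number of vertices, then G admits an antimagic orientation. -/
open Finset

/-!
An Euler circuit of each component reduces the problem to choosing directions and an order of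
labelling along closed walks. Since all degrees agree, distinct vertex-sums may be tested on the
shifted sums `2 * vertexSum + degree`, which telescope along directed walks: labels
`s + 1, …, t` on a walk from `a` to `b` contribute `-(2 * s + 1)` at `a` and `2 * t + 1` at `b`.

A set `U` of vertices on a walk is peeled from both ends: the initial piece up to the first vertex
`x` of `U` and the final piece after the last one `y` are labelled next, and the walk from `x` to
`y` that remains is treated in the same way with all arcs reversed. Each peeled pair receives sums
whose sizes grow with the labels, so that all sums on `U` differ; the ends absorb the rest. On a
closed walk this handles an odd number of vertices besides the base point, that is, an even
component, with sums confined to a range determined by the labels used, so that components labelled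
one after another do not interfere.

In an odd component one vertex is left over. In the component labelled last it may have sum `0`; in
the one labelled first, label `1` on the arc from it to the base point makes the sums of both
positive and small. This accommodates two odd components.
-/

section EulerCircuit

open SimpleGraph

variable {V : Type*} {G : SimpleGraph V}

theorem countP_mem_eq_degree [DecidableEq V] {v : V} [Fintype (G.neighborSet v)]
    {l : List (Sym2 V)} (hl : l.Nodup) (hmem : ∀ w, s(v, w) ∈ l ↔ G.Adj v w) :
    l.countP (v ∈ ·) = G.degree v := by
  rw [← G.card_incidenceFinset_eq_degree, List.countP_eq_length_filter,
    ← List.toFinset_card_of_nodup (hl.filter _)]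
  congr 1
  ext e
  simp only [List.mem_toFinset, List.mem_filter, decide_eq_true_eq, G.mem_incidenceFinset]
  constructor
  · rintro ⟨he, w, rfl⟩
    exact ⟨(hmem w).1 he, Sym2.mem_mk_left v w⟩
  · rintro ⟨he, w, rfl⟩
    exact ⟨(hmem w).2 he, Sym2.mem_mk_left v w⟩

theorem mem_edges_of_length_maximal {a b z : V} {p : G.Walk a b} (hp : p.IsTrail)
    (hmax : ∀ (u v : V) (q : G.Walk u v), q.IsTrail → q.length ≤ p.length) (hz : G.Adj a z) :
    s(a, z) ∈ p.edges := by
  by_contra hnot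
  have hcons : (p.cons hz.symm).IsTrail := (hp.cons hz.symm) (by rwa [Sym2.eq_swap])
  simpa using hmax _ _ _ hcons

theorem eq_of_length_maximal_of_even_degree {a b : V} [Fintype (G.neighborSet a)]
    {p : G.Walk a b} (hp : p.IsTrail)
    (hmax : ∀ (u v : V) (q : G.Walk u v), q.IsTrail → q.length ≤ p.length)
    (heven : Even (G.degree a)) : a = b := by
  classical
  have hcount : p.edges.countP (a ∈ ·) = G.degree a :=
    countP_mem_eq_degree hp.edges_nodup fun _ =>
      ⟨p.adj_of_mem_edges, mem_edges_of_length_maximal hp hmax⟩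
  by_contra hab
  exact ((hp.even_countP_edges_iff a).1 (hcount ▸ heven) hab).1 rfl

theorem exists_isEulerian_of_even_degree [G.LocallyFinite] [Finite G.edgeSet] [DecidableEq V]
    (hG : G.Connected) (heven : ∀ v, Even (G.degree v)) :
    ∃ (a : V) (p : G.Walk a a), p.IsEulerian ∧ ∀ v, v ∈ p.support := by
  have := hG.nonempty
  obtain ⟨a, b, p, hp, hmax⟩ := Walk.exists_isTrail_forall_isTrail_length_le_length G
  obtain rfl := eq_of_length_maximal_of_even_degree hp (fun u v q hq => hmax u v q hq) (heven a)
  have hincident : ∀ v ∈ p.support, ∀ w, G.Adj v w → s(v, w) ∈ p.edges := by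
    intro v hv w hvw
    rw [← (p.rotate_edges v hv).mem_iff]
    exact mem_edges_of_length_maximal (hp.rotate hv)
      (fun x y q hq => by simpa using hmax x y q hq) hvw
  have hsupport : ∀ v, v ∈ p.support := by
    intro v
    by_contra hv
    obtain ⟨q⟩ := hG.preconnected a v
    obtain ⟨e, -, hfst, hsnd⟩ :=
      q.exists_boundary_dart {x | x ∈ p.support} p.start_mem_support hv
    exact hsnd (p.snd_mem_support_of_mem_edges (hincident _ hfst _ e.adj))
  refine ⟨a, p, hp.isEulerian_of_forall_mem ?_, hsupport⟩
  rintro ⟨v, w⟩ hvw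
  exact hincident v (hsupport v) w hvw

/-- The closed walk `p` is an Eulerian circuit of the connected component `C`, viewed in the
ambient graph. -/
structure IsEulerCircuitOf {a : V} (p : G.Walk a a) (C : G.ConnectedComponent) : Prop where
  isTrail : p.IsTrail
  mem_support_iff : ∀ v, v ∈ p.support ↔ v ∈ C.supp
  mem_edges_iff : ∀ v w, s(v, w) ∈ p.edges ↔ G.Adj v w ∧ v ∈ C.supp

theorem IsEulerCircuitOf.not_nil {a : V} {p : G.Walk a a} {C : G.ConnectedComponent}
    (hp : IsEulerCircuitOf p C) [Fintype (G.neighborSet a)] (ha : 0 < G.degree a) : ¬p.Nil := by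
  obtain ⟨w, haw⟩ := (G.degree_pos_iff_exists_adj a).1 ha
  have hmem := (hp.mem_edges_iff a w).2 ⟨haw, (hp.mem_support_iff a).1 p.start_mem_support⟩
  exact mt Walk.edges_eq_nil.2 (List.ne_nil_of_mem hmem)

theorem exists_isEulerCircuitOf [Finite V] [G.LocallyFinite]
    (heven : ∀ v, Even (G.degree v)) (C : G.ConnectedComponent) :
    ∃ (a : V) (p : G.Walk a a), IsEulerCircuitOf p C := by
  classical
  have := Fintype.ofFinite V
  have hdeg : ∀ v : C, C.toSimpleGraph.degree v = G.degree v := by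
    intro v
    rw [← card_neighborSet_eq_degree, ← card_neighborSet_eq_degree]
    exact Fintype.card_congr
      { toFun w := ⟨w.1, w.2⟩
        invFun w := ⟨⟨w.1, C.mem_supp_of_adj_mem_supp v.2 w.2⟩, w.2⟩ }
  obtain ⟨a, p, hp, hsupport⟩ := exists_isEulerian_of_even_degree C.connected_toSimpleGraph
    fun v => (hdeg v).symm ▸ heven v
  have hmem : ∀ v, v ∈ (p.map C.toSimpleGraph_hom).support ↔ v ∈ C.supp := by
    intro v
    rw [Walk.support_map, List.mem_map]
    exact ⟨fun ⟨w, _, hw⟩ => hw ▸ w.2, fun hv => ⟨⟨v, hv⟩, hsupport _, rfl⟩⟩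
  refine ⟨_, p.map C.toSimpleGraph_hom, hp.isTrail.map Subtype.val_injective, hmem, ?_⟩
  intro v w
  refine ⟨fun h => ⟨Walk.adj_of_mem_edges _ h,
    (hmem v).1 (Walk.fst_mem_support_of_mem_edges _ h)⟩, fun ⟨hvw, hv⟩ => ?_⟩
  rw [Walk.edges_map, List.mem_map]
  exact ⟨s(⟨v, hv⟩, ⟨w, C.mem_supp_of_adj_mem_supp hv hvw⟩), hp.mem_edges_iff.2 hvw, rfl⟩

end EulerCircuit

section ShiftedSum

open SimpleGraph

variable {V : Type*} [DecidableEq V] {G : SimpleGraph V}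

/-- If the arcs of `L` receive the labels `s + 1, s + 2, …` in order, then `shiftedSum s L u` is
twice the vertex-sum of `u` plus the degree of `u` in `L`. Adding the degree, which is constant in
a regular graph, makes consecutive contributions along a directed walk cancel. -/
def shiftedSum : ℕ → List G.Dart → V → ℤ
  | _, [] => 0
  | s, e :: L => Pi.single e.snd (2 * s + 3 : ℤ) - Pi.single e.fst (2 * s + 1 : ℤ) +
      shiftedSum (s + 1) L

theorem shiftedSum_append (s : ℕ) (L M : List G.Dart) :
    shiftedSum s (L ++ M) = shiftedSum s L + shiftedSum (s + L.length) M := by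
  induction L generalizing s with
  | nil => simp [shiftedSum]
  | cons e L ih =>
    simp only [List.cons_append, shiftedSum, ih, List.length_cons, add_assoc, add_comm 1]

theorem shiftedSum_darts {a b : V} (p : G.Walk a b) (s : ℕ) :
    shiftedSum s p.darts =
      Pi.single b (2 * ↑(s + p.length) + 1 : ℤ) - Pi.single a (2 * s + 1 : ℤ) := by
  induction p generalizing s with
  | nil => simp [shiftedSum]
  | cons h p ih =>
    simp only [Walk.darts_cons, shiftedSum, ih, Walk.length_cons]
    push_cast
    ring_nf

theorem shiftedSum_eq_zero {L : List G.Dart} {u : V}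
    (hu : ∀ w, s(u, w) ∉ L.map Dart.edge) (s : ℕ) : shiftedSum s L u = 0 := by
  induction L generalizing s with
  | nil => rfl
  | cons e L ih =>
    simp only [List.map_cons, List.mem_cons, not_or] at hu
    have hfst : u ≠ e.fst := fun h => (hu e.snd).1 (h ▸ rfl)
    have hsnd : u ≠ e.snd := fun h => (hu e.fst).1 (h ▸ Sym2.eq_swap)
    simp [shiftedSum, hfst, hsnd, ih fun w => (hu w).2]

end ShiftedSum

section Peeling

open SimpleGraph

theorem injOn_insert_of_forall_ne {α β : Type*} {f : α → β} {a : α} {s : Set α}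
    (hs : Set.InjOn f s) (ha : ∀ u ∈ s, f u ≠ f a) : Set.InjOn f (insert a s) :=
  (Set.injOn_insert fun h => ha a h rfl).2 ⟨hs, fun ⟨u, hu, hua⟩ => ha u hu hua⟩

variable {V : Type*} {G : SimpleGraph V}

theorem exists_append_of_mem_support {a b : V} (p : G.Walk a b) {U : Set V} (hU : U.Nonempty)
    (hp : ∀ u ∈ U, u ∈ p.support) :
    ∃ x ∈ U, ∃ (q : G.Walk a x) (r : G.Walk x b),
      p = q.append r ∧ ∀ u ∈ U, u ∈ r.support := by
  induction p with
  | nil =>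
    obtain ⟨x, hx⟩ := hU
    obtain rfl : x = _ := by simpa using hp x hx
    exact ⟨x, hx, .nil, .nil, rfl, hp⟩
  | @cons a c b h p ih =>
    by_cases ha : a ∈ U
    · exact ⟨a, ha, .nil, .cons h p, rfl, hp⟩
    · have htail : ∀ u ∈ U, u ∈ p.support := fun u hu =>
        (List.mem_cons.1 (hp u hu)).resolve_left fun hua => ha (hua ▸ hu)
      obtain ⟨x, hx, q, r, rfl, hr⟩ := ih htail
      exact ⟨x, hx, .cons h q, r, rfl, hr⟩

theorem exists_walks_of_mem_support {a b : V} (p : G.Walk a b) {U : Finset V} (hU : 1 < #U)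
    (hp : ∀ u ∈ U, u ∈ p.support) :
    ∃ x ∈ U, ∃ y ∈ U, x ≠ y ∧ ∃ (q : G.Walk a x) (q' : G.Walk b y) (r : G.Walk x y),
      p.edges.Perm (q.edges ++ q'.edges ++ r.edges) ∧ ∀ u ∈ U, u ≠ x → u ∈ r.support := by
  classical
  obtain ⟨x, hx, q, p', rfl, hp'⟩ :=
    exists_append_of_mem_support p (Finset.card_pos.1 (by omega)) hp
  have herase : (U.erase x).Nonempty := by
    rw [← Finset.card_pos, Finset.card_erase_of_mem hx]
    omega
  obtain ⟨y, hy, q', r, hrev, hr⟩ := exists_append_of_mem_support p'.reverse herase fun u hu => by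
    simpa using hp' u (Finset.mem_of_mem_erase hu)
  refine ⟨x, hx, y, Finset.mem_of_mem_erase hy, (Finset.ne_of_mem_erase hy).symm, q, q',
    r.reverse, ?_, fun u hu hux => by simpa using hr u (Finset.mem_erase.2 ⟨hux, hu⟩)⟩
  have hedges : p'.edges.reverse = q'.edges ++ r.edges := by
    simpa using congrArg Walk.edges hrev
  rw [Walk.edges_append, Walk.edges_reverse, List.append_assoc]
  refine .append_left _ ((List.reverse_perm _).symm.trans ?_)
  rw [hedges]
  exact .append_left _ (List.reverse_perm _).symm

variable [DecidableEq V]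

theorem exists_shiftedSum_walk_pair (ε : ℤˣ) {a b x y : V} (q : G.Walk a x) (q' : G.Walk b y)
    (hax : a ≠ x) (hby : b ≠ y) (s : ℕ) :
    ∃ (M : List G.Dart) (i i' j j' : ℕ),
      (M.map Dart.edge).Perm (q.edges ++ q'.edges) ∧
      (s ≤ i ∧ i < i' ∧ i' ≤ s + M.length) ∧ (s ≤ j ∧ j < j' ∧ j' ≤ s + M.length) ∧
      ε • shiftedSum s M = Pi.single a (2 * i + 1 : ℤ) + Pi.single b (2 * i' + 1 : ℤ) -
        (Pi.single x (2 * j + 1 : ℤ) + Pi.single y (2 * j' + 1 : ℤ)) := by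
  have hq := Walk.not_nil_iff_lt_length.1 (Walk.not_nil_of_ne hax (p := q))
  have hq' :=
    Walk.not_nil_iff_lt_length.1 (Walk.not_nil_of_ne hby (p := q'))
  rcases Int.units_eq_one_or ε with rfl | rfl
  · refine ⟨q.reverse.darts ++ q'.reverse.darts, s + q.length, s + q.length + q'.length,
      s, s + q.length, ?_, ?_, ?_, ?_⟩
    · rw [List.map_append]
      change (q.reverse.edges ++ q'.reverse.edges).Perm _
      rw [Walk.edges_reverse, Walk.edges_reverse]
      exact (List.reverse_perm _).append (List.reverse_perm _)
    · simp only [List.length_append, Walk.length_darts,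
        Walk.length_reverse]
      omega
    · simp only [List.length_append, Walk.length_darts,
        Walk.length_reverse]
      omega
    · simp only [one_smul, shiftedSum_append, shiftedSum_darts, Walk.length_darts,
        Walk.length_reverse]
      abel
  · refine ⟨q.darts ++ q'.darts, s, s + q.length, s + q.length, s + q.length + q'.length,
      by rw [List.map_append]; rfl, ?_, ?_, ?_⟩
    · simp only [List.length_append, Walk.length_darts]
      omega
    · simp only [List.length_append, Walk.length_darts]
      omega
    · simp only [Units.neg_smul, one_smul, shiftedSum_append, shiftedSum_darts,
        Walk.length_darts]
      abel

/-- The shape of the shifted sums `f` obtained, up to sign, from a walk between `a` and `b` whose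
edges are directed and labelled from `s + 1` to `t` by peeling off the set `U` of inner vertices.
Outside `U` only the ends `a` and `b` have a nonzero sum, of size governed by `i` and `j`. -/
structure IsPeelingProfile (f : V → ℤ) (a b : V) (U : Finset V) (s i j t : ℕ) : Prop where
  le_left : s ≤ i
  left_lt_right : i < j
  right_le : j ≤ t
  apply_of_notMem : ∀ u ∉ U,
    f u = (Pi.single a (2 * i + 1 : ℤ) + Pi.single b (2 * j + 1 : ℤ) : V → ℤ) u
  natAbs_mem : ∀ u ∈ U, (f u).natAbs ∈ Set.Ioo (4 * s + 2) (4 * t + 2)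
  lt_of_pos : ∀ u ∈ U, 0 < f u → 4 * (j : ℤ) + 2 < f u
  injOn : Set.InjOn f U

theorem IsPeelingProfile.singleton {a b x : V} (hax : a ≠ x) (hbx : b ≠ x) {s i i' j j' t : ℕ}
    (hi : s ≤ i ∧ i < i' ∧ i' ≤ t) (hj : s ≤ j ∧ j < j' ∧ j' ≤ t) :
    IsPeelingProfile (Pi.single a (2 * i + 1 : ℤ) + Pi.single b (2 * i' + 1 : ℤ) -
      (Pi.single x (2 * j + 1 : ℤ) + Pi.single x (2 * j' + 1 : ℤ))) a b {x} s i i' t where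
  le_left := hi.1
  left_lt_right := hi.2.1
  right_le := hi.2.2
  apply_of_notMem u hu := by simp_all
  natAbs_mem u hu := by
    obtain rfl := Finset.mem_singleton.1 hu
    simp only [Pi.sub_apply, Pi.add_apply, Pi.single_eq_same, ne_eq, hax.symm, hbx.symm,
      not_false_eq_true, Pi.single_eq_of_ne, Set.mem_Ioo]
    omega
  lt_of_pos u hu := by
    obtain rfl := Finset.mem_singleton.1 hu
    simp only [Pi.sub_apply, Pi.add_apply, Pi.single_eq_same, ne_eq, hax.symm, hbx.symm,
      not_false_eq_true, Pi.single_eq_of_ne]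
    omega
  injOn := by simp

theorem IsPeelingProfile.insert_insert {f g : V → ℤ} {a b x y : V} {U : Finset V}
    {s i i' j j' r k l t : ℕ} (hf : IsPeelingProfile f x y U r k l t)
    (hi : s ≤ i ∧ i < i' ∧ i' ≤ r) (hj : s ≤ j ∧ j < j' ∧ j' ≤ r)
    (hgx : g x = -(2 * j + 2 * k + 2)) (hgy : g y = -(2 * j' + 2 * l + 2))
    (hgU : ∀ u ∈ U, g u = -f u)
    (hg : ∀ u ∉ insert x (insert y U),
      g u = (Pi.single a (2 * i + 1 : ℤ) + Pi.single b (2 * i' + 1 : ℤ) : V → ℤ) u) :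
    IsPeelingProfile g a b (insert x (insert y U)) s i i' t := by
  have hrk := hf.le_left
  have hkl := hf.left_lt_right
  have hlt := hf.right_le
  have hfU : ∀ u ∈ U, (4 * r + 2 < (f u).natAbs ∧ (f u).natAbs < 4 * t + 2) ∧
      (0 < f u → 4 * (l : ℤ) + 2 < f u) := fun u hu => ⟨hf.natAbs_mem u hu, hf.lt_of_pos u hu⟩
  refine ⟨hi.1, hi.2.1, by omega, hg, ?_, ?_, ?_⟩
  · simp only [Finset.forall_mem_insert, hgx, hgy, Set.mem_Ioo]
    refine ⟨by omega, by omega, fun u hu => ?_⟩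
    have := hfU u hu
    rw [hgU u hu]
    omega
  · simp only [Finset.forall_mem_insert, hgx, hgy]
    refine ⟨by omega, by omega, fun u hu => ?_⟩
    have := hfU u hu
    rw [hgU u hu]
    omega
  · -- The sums on `U` are positive or below `-(4 * l + 2) < g y < g x < 0`.
    have hne : ∀ u ∈ U, g u ≠ g x ∧ g u ≠ g y := by
      intro u hu
      have := hfU u hu
      rw [hgU u hu, hgx, hgy]
      omega
    rw [Finset.coe_insert, Finset.coe_insert]
    refine injOn_insert_of_forall_ne (injOn_insert_of_forall_ne (fun u hu v hv huv =>
      hf.injOn hu hv ?_) fun u hu => (hne u hu).2) ?_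
    · rwa [hgU u hu, hgU v hv, neg_inj] at huv
    · rw [Set.forall_mem_insert]
      exact ⟨by omega, fun u hu => (hne u hu).1⟩

theorem IsPeelingProfile.sub {f : V → ℤ} {a b x y : V} {U : Finset V}
    {s i i' j j' r k l t : ℕ} (hf : IsPeelingProfile f x y U r k l t)
    (hx : x ∉ U) (hy : y ∉ U) (hxy : x ≠ y) (ha : a ∉ insert x (insert y U))
    (hb : b ∉ insert x (insert y U))
    (hi : s ≤ i ∧ i < i' ∧ i' ≤ r) (hj : s ≤ j ∧ j < j' ∧ j' ≤ r) :
    IsPeelingProfile (Pi.single a (2 * i + 1 : ℤ) + Pi.single b (2 * i' + 1 : ℤ) -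
      (Pi.single x (2 * j + 1 : ℤ) + Pi.single y (2 * j' + 1 : ℤ)) - f)
      a b (insert x (insert y U)) s i i' t := by
  simp only [Finset.mem_insert, not_or] at ha hb
  refine hf.insert_insert hi hj ?_ ?_ ?_ ?_
  · have hfx := hf.apply_of_notMem x hx
    simp only [Pi.sub_apply, Pi.add_apply, hfx, Pi.single_eq_same, ne_eq, hxy, Ne.symm ha.1,
      Ne.symm hb.1, not_false_eq_true, Pi.single_eq_of_ne]
    ring
  · have hfy := hf.apply_of_notMem y hy
    simp only [Pi.sub_apply, Pi.add_apply, hfy, Pi.single_eq_same, ne_eq, hxy.symm,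
      Ne.symm ha.2.1, Ne.symm hb.2.1, not_false_eq_true, Pi.single_eq_of_ne]
    ring
  · intro u hu
    have hux : u ≠ x := fun h => hx (h ▸ hu)
    have huy : u ≠ y := fun h => hy (h ▸ hu)
    have hua : u ≠ a := fun h => ha.2.2 (h ▸ hu)
    have hub : u ≠ b := fun h => hb.2.2 (h ▸ hu)
    simp [hux, huy, hua, hub]
  · intro u hu
    simp only [Finset.mem_insert, not_or] at hu
    simp [hf.apply_of_notMem u hu.2.2, hu.1, hu.2.1]

theorem exists_isPeelingProfile (ε : ℤˣ) {a b : V} (p : G.Walk a b) {U : Finset V}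
    (hodd : Odd #U) (ha : a ∉ U) (hb : b ∉ U) (hp : ∀ u ∈ U, u ∈ p.support) (s : ℕ) :
    ∃ (L : List G.Dart) (i j : ℕ), (L.map Dart.edge).Perm p.edges ∧
      IsPeelingProfile (ε • shiftedSum s L) a b U s i j (s + L.length) := by
  obtain ⟨n, hn⟩ := hodd
  induction n generalizing ε a b U s with
  | zero =>
    obtain ⟨x, rfl⟩ := Finset.card_eq_one.1 hn
    obtain ⟨q, r, rfl⟩ := Walk.mem_support_iff_exists_append.1 (hp x (by simp))
    simp only [Finset.mem_singleton] at ha hb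
    obtain ⟨M, i, i', j, j', hM, hi, hj, hsum⟩ :=
      exists_shiftedSum_walk_pair ε q r.reverse ha hb s
    refine ⟨M, i, i', hM.trans ?_, hsum ▸ .singleton ha hb hi hj⟩
    rw [Walk.edges_append, Walk.edges_reverse]
    exact .append_left _ (List.reverse_perm _)
  | succ n ih =>
    obtain ⟨x, hx, y, hy, hxy, q, q', r, hedges, hr⟩ :=
      exists_walks_of_mem_support p (by omega) hp
    obtain ⟨W, hxW, rfl⟩ : ∃ W, x ∉ W ∧ insert x W = U :=
      ⟨U.erase x, by simp, Finset.insert_erase hx⟩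
    obtain ⟨W, hyW, rfl⟩ : ∃ W', y ∉ W' ∧ insert y W' = W :=
      ⟨W.erase y, by simp, Finset.insert_erase (by simpa [hxy.symm] using hy)⟩
    rw [Finset.card_insert_of_notMem hxW, Finset.card_insert_of_notMem hyW] at hn
    simp only [Finset.mem_insert, not_or] at hxW
    have hax : a ≠ x := fun h => ha (h ▸ hx)
    have hby : b ≠ y := fun h => hb (h ▸ hy)
    obtain ⟨M, i, i', j, j', hM, hi, hj, hsum⟩ := exists_shiftedSum_walk_pair ε q q' hax hby s
    obtain ⟨L, k, l, hL, hprofile⟩ := ih (-ε) r hxW.2 hyW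
      (fun u hu => hr u (by simp [hu]) fun h => hxW.2 (h ▸ hu)) (s + M.length) (by omega)
    refine ⟨M ++ L, i, i', ?_, ?_⟩
    · rw [List.map_append]
      exact (hM.append hL).trans hedges.symm
    · have hcombine := hprofile.sub hxW.2 hyW hxy ha hb hi hj
      rwa [Units.neg_smul, sub_neg_eq_add, ← hsum, ← smul_add, ← shiftedSum_append,
        add_assoc, ← List.length_append] at hcombine

end Peeling

section ClosedWalk

open SimpleGraph

variable {V : Type*} [DecidableEq V] {G : SimpleGraph V}

theorem exists_injOn_shiftedSum_insert {a : V} (p : G.Walk a a) {U : Finset V} (hodd : Odd #U)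
    (ha : a ∉ U) (hp : ∀ u ∈ U, u ∈ p.support) (s : ℕ) :
    ∃ L : List G.Dart, (L.map Dart.edge).Perm p.edges ∧
      Set.InjOn (shiftedSum s L) (insert a U : Finset V) ∧
      (∀ u ∈ insert a U,
        (shiftedSum s L u).natAbs ∈ Set.Ioo (4 * s + 2) (4 * (s + L.length) + 2)) ∧
      ∀ u ∉ insert a U, shiftedSum s L u = 0 := by
  obtain ⟨L, i, j, hL, hprofile⟩ := exists_isPeelingProfile (-1) p hodd ha ha hp s
  rw [Units.neg_smul, one_smul] at hprofile
  have hsi := hprofile.le_left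
  have hij := hprofile.left_lt_right
  have hjt := hprofile.right_le
  have hsum_a : shiftedSum s L a = -(2 * i + 2 * j + 2) := by
    have := hprofile.apply_of_notMem a ha
    simp only [Pi.neg_apply, Pi.add_apply, Pi.single_eq_same] at this
    omega
  have hne : ∀ u ∈ U, shiftedSum s L u ≠ shiftedSum s L a := by
    intro u hu
    have hpos := hprofile.lt_of_pos u hu
    rw [Pi.neg_apply] at hpos
    omega
  refine ⟨L, hL, ?_, ?_, ?_⟩
  · rw [Finset.coe_insert]
    exact injOn_insert_of_forall_ne
      (fun u hu v hv huv => hprofile.injOn hu hv (congrArg Neg.neg huv)) hne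
  · rw [Finset.forall_mem_insert, hsum_a]
    refine ⟨⟨by omega, by omega⟩, fun u hu => ?_⟩
    simpa only [Pi.neg_apply, Int.natAbs_neg] using hprofile.natAbs_mem u hu
  · intro u hu
    rw [Finset.mem_insert, not_or] at hu
    simpa [hu.1] using hprofile.apply_of_notMem u hu.2

theorem exists_injOn_shiftedSum_of_adj {a w : V} (h : G.Adj a w) (q : G.Walk w a) {U : Finset V}
    (hodd : Odd #U) (ha : a ∉ U) (hw : w ∉ U) (hq : ∀ u ∈ U, u ∈ q.support) :
    ∃ L : List G.Dart, (L.map Dart.edge).Perm (q.cons h).edges ∧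
      Set.InjOn (shiftedSum 0 L) (insert a (insert w U) : Finset V) ∧
      ∀ u ∈ insert a (insert w U),
        (shiftedSum 0 L u).natAbs ∈ Set.Ioo 0 (4 * L.length + 2) := by
  obtain ⟨L, i, j, hL, hprofile⟩ := exists_isPeelingProfile 1 q hodd hw ha hq 1
  rw [one_smul] at hprofile
  have hi := hprofile.le_left
  have hij := hprofile.left_lt_right
  have hjt := hprofile.right_le
  let e : G.Dart := ⟨(w, a), h.symm⟩
  have hsum_a : shiftedSum 0 (e :: L) a = 2 * j + 4 := by
    simp only [shiftedSum, e, Pi.add_apply, Pi.sub_apply, hprofile.apply_of_notMem a ha,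
      Pi.single_eq_same, ne_eq, h.ne, not_false_eq_true, Pi.single_eq_of_ne]
    push_cast
    ring
  have hsum_w : shiftedSum 0 (e :: L) w = 2 * i := by
    simp [shiftedSum, e, hprofile.apply_of_notMem w hw, h.ne']
  have hsum : ∀ u ∈ U, shiftedSum 0 (e :: L) u = shiftedSum 1 L u := by
    intro u hu
    have hua : u ≠ a := fun h => ha (h ▸ hu)
    have huw : u ≠ w := fun h => hw (h ▸ hu)
    simp [shiftedSum, e, hua, huw]
  have hU : ∀ u ∈ U, (6 < (shiftedSum 0 (e :: L) u).natAbs ∧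
      (shiftedSum 0 (e :: L) u).natAbs < 4 * (1 + L.length) + 2) ∧
      (0 < shiftedSum 0 (e :: L) u → 4 * (j : ℤ) + 2 < shiftedSum 0 (e :: L) u) := fun u hu =>
    (hsum u hu).symm ▸ ⟨hprofile.natAbs_mem u hu, hprofile.lt_of_pos u hu⟩
  refine ⟨e :: L, ?_, ?_, ?_⟩
  · rw [List.map_cons, Walk.edges_cons, show e.edge = s(a, w) from Sym2.eq_swap]
    exact hL.cons _
  · rw [Finset.coe_insert, Finset.coe_insert]
    refine injOn_insert_of_forall_ne (injOn_insert_of_forall_ne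
      (hprofile.injOn.congr fun u hu => (hsum u hu).symm) fun u hu => ?_) ?_
    · have := hU u hu
      omega
    · rw [Set.forall_mem_insert]
      refine ⟨by omega, fun u hu => ?_⟩
      have := hU u hu
      omega
  · simp only [Finset.forall_mem_insert, List.length_cons, Set.mem_Ioo]
    refine ⟨by omega, by omega, fun u hu => ?_⟩
    have := hU u hu
    omega

end ClosedWalk

section AntimagicListing

open SimpleGraph

variable {V : Type*} [DecidableEq V] {G : SimpleGraph V}

/-- `L` lists, in some direction, exactly the edges of `G` meeting `W`, which have both ends in
`W`. Labelled from `s + 1` on in this order, they give the vertices of `W` distinct shifted sums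
with absolute values in `I`. -/
structure IsAntimagicListing (s : ℕ) (L : List G.Dart) (W : Set V) (I : Set ℕ) : Prop where
  nodup : (L.map Dart.edge).Nodup
  mem_iff : ∀ v w, s(v, w) ∈ L.map Dart.edge ↔ G.Adj v w ∧ v ∈ W
  injOn : Set.InjOn (shiftedSum s L) W
  natAbs_mem : ∀ u ∈ W, (shiftedSum s L u).natAbs ∈ I

theorem IsAntimagicListing.mono {s : ℕ} {L : List G.Dart} {W : Set V} {I J : Set ℕ}
    (h : IsAntimagicListing s L W I) (hIJ : I ⊆ J) : IsAntimagicListing s L W J :=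
  { h with natAbs_mem := fun u hu => hIJ (h.natAbs_mem u hu) }

theorem IsAntimagicListing.append {s : ℕ} {L M : List G.Dart} {W K : Set V} {I J : Set ℕ}
    (hL : IsAntimagicListing s L W I) (hM : IsAntimagicListing (s + L.length) M K J)
    (hWK : Disjoint W K) (hIJ : Disjoint I J) :
    IsAntimagicListing s (L ++ M) (W ∪ K) (I ∪ J) := by
  have hsumW : ∀ u ∈ W, shiftedSum s (L ++ M) u = shiftedSum s L u := by
    intro u hu
    rw [shiftedSum_append, Pi.add_apply, shiftedSum_eq_zero (L := M), add_zero]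
    exact fun w hw => hWK.notMem_of_mem_left hu ((hM.mem_iff u w).1 hw).2
  have hsumK : ∀ u ∈ K, shiftedSum s (L ++ M) u = shiftedSum (s + L.length) M u := by
    intro u hu
    rw [shiftedSum_append, Pi.add_apply, shiftedSum_eq_zero (L := L), zero_add]
    exact fun w hw => hWK.notMem_of_mem_right hu ((hL.mem_iff u w).1 hw).2
  refine ⟨?_, ?_, ?_, ?_⟩
  · rw [List.map_append]
    refine hL.nodup.append hM.nodup ?_
    rintro ⟨v, w⟩ hvL hvM
    exact hWK.notMem_of_mem_left ((hL.mem_iff v w).1 hvL).2 ((hM.mem_iff v w).1 hvM).2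
  · intro v w
    rw [List.map_append, List.mem_append, hL.mem_iff, hM.mem_iff, Set.mem_union, and_or_left]
  · rw [Set.injOn_union hWK]
    refine ⟨hL.injOn.congr fun u hu => (hsumW u hu).symm,
      hM.injOn.congr fun u hu => (hsumK u hu).symm, fun u hu v hv huv => ?_⟩
    rw [hsumW u hu, hsumK v hv] at huv
    exact hIJ.notMem_of_mem_left (hL.natAbs_mem u hu) (huv ▸ hM.natAbs_mem v hv)
  · rintro u (hu | hu)
    · exact .inl (hsumW u hu ▸ hL.natAbs_mem u hu)
    · exact .inr (hsumK u hu ▸ hM.natAbs_mem u hu)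

theorem exists_odd_card_insert_insert_eq {α : Type*} [DecidableEq α] {K : Finset α}
    (hK : Odd #K) {a w : α} (ha : a ∈ K) (hw : w ∈ K) (haw : a ≠ w) :
    ∃ U : Finset α, a ∉ U ∧ w ∉ U ∧ insert a (insert w U) = K ∧ Odd #U := by
  have hw' : w ∈ K.erase a := Finset.mem_erase.2 ⟨haw.symm, hw⟩
  refine ⟨(K.erase a).erase w, by simp, by simp, ?_, ?_⟩
  · rw [Finset.insert_erase hw', Finset.insert_erase ha]
  · have hcard := Finset.card_erase_add_one ha
    have hcard' := Finset.card_erase_add_one hw'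
    grind

namespace IsEulerCircuitOf

variable {a : V} {p : G.Walk a a} {C : G.ConnectedComponent}

theorem coe_support_toFinset (hp : IsEulerCircuitOf p C) :
    (p.support.toFinset : Set V) = C.supp := by
  ext v
  rw [List.coe_toFinset, Set.mem_ofPred_eq, hp.mem_support_iff]

theorem card_support_toFinset (hp : IsEulerCircuitOf p C) :
    #p.support.toFinset = C.supp.ncard := by
  rw [← hp.coe_support_toFinset, Set.ncard_coe_finset]

theorem isAntimagicListing (hp : IsEulerCircuitOf p C) {s : ℕ} {L : List G.Dart} {I : Set ℕ}
    (hL : (L.map Dart.edge).Perm p.edges)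
    (hinj : Set.InjOn (shiftedSum s L) p.support.toFinset)
    (hI : ∀ u ∈ p.support.toFinset, (shiftedSum s L u).natAbs ∈ I) :
    IsAntimagicListing s L C.supp I where
  nodup := hL.nodup_iff.2 hp.isTrail.edges_nodup
  mem_iff v w := by rw [hL.mem_iff, hp.mem_edges_iff]
  injOn := hp.coe_support_toFinset ▸ hinj
  natAbs_mem u hu := hI u (List.mem_toFinset.2 ((hp.mem_support_iff u).2 hu))

theorem exists_isAntimagicListing_of_even (hp : IsEulerCircuitOf p C) (hC : Even C.supp.ncard)
    (s : ℕ) : ∃ L : List G.Dart,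
      IsAntimagicListing s L C.supp (Set.Ioo (4 * s + 2) (4 * (s + L.length) + 2)) := by
  have ha : a ∈ p.support.toFinset := List.mem_toFinset.2 p.start_mem_support
  have hodd : Odd #(p.support.toFinset.erase a) := by
    rw [Finset.card_erase_of_mem ha, hp.card_support_toFinset]
    exact Nat.Even.sub_odd (hp.card_support_toFinset ▸ Finset.card_pos.2 ⟨a, ha⟩) hC odd_one
  obtain ⟨L, hL, hinj, hbound, -⟩ := exists_injOn_shiftedSum_insert p hodd
    (Finset.notMem_erase a _) (fun u hu => List.mem_toFinset.1 (Finset.mem_of_mem_erase hu)) s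
  rw [Finset.insert_erase ha] at hinj hbound
  exact ⟨L, hp.isAntimagicListing hL hinj hbound⟩

theorem exists_isAntimagicListing_zero_of_odd (hp : IsEulerCircuitOf p C)
    (hC : Odd C.supp.ncard) (hnil : ¬p.Nil) :
    ∃ L : List G.Dart, IsAntimagicListing 0 L C.supp (Set.Ioo 0 (4 * L.length + 2)) := by
  obtain ⟨w, h, q, rfl⟩ := Walk.not_nil_iff.1 hnil
  rw [← hp.card_support_toFinset] at hC
  obtain ⟨U, ha, hw, hU, hodd⟩ := exists_odd_card_insert_insert_eq hC
    (List.mem_toFinset.2 (Walk.start_mem_support _))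
    (List.mem_toFinset.2 (List.mem_cons_of_mem _ q.start_mem_support)) h.ne
  have hq : ∀ u ∈ U, u ∈ q.support := by
    intro u hu
    have hmem : u ∈ (q.cons h).support.toFinset :=
      hU ▸ Finset.mem_insert_of_mem (Finset.mem_insert_of_mem hu)
    exact (List.mem_cons.1 (List.mem_toFinset.1 hmem)).resolve_left fun hua => ha (hua ▸ hu)
  obtain ⟨L, hL, hinj, hbound⟩ := exists_injOn_shiftedSum_of_adj h q hodd ha hw hq
  rw [hU] at hinj hbound
  exact ⟨L, hp.isAntimagicListing hL hinj hbound⟩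

theorem exists_isAntimagicListing_of_odd (hp : IsEulerCircuitOf p C) (hC : Odd C.supp.ncard)
    (hnil : ¬p.Nil) (s : ℕ) :
    ∃ L : List G.Dart, IsAntimagicListing s L C.supp (insert 0 (Set.Ioi (4 * s + 2))) := by
  rw [← hp.card_support_toFinset] at hC
  obtain ⟨U, ha, hw, hU, hodd⟩ := exists_odd_card_insert_insert_eq hC
    (List.mem_toFinset.2 p.start_mem_support)
    (List.mem_toFinset.2 (p.getVert_mem_support 1)) (p.adj_snd hnil).ne
  obtain ⟨L, hL, hinj, hbound, hzero⟩ := exists_injOn_shiftedSum_insert p hodd ha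
    (fun u hu => List.mem_toFinset.1 (by simp [← hU, hu])) s
  have hsum_snd : shiftedSum s L p.snd = 0 := hzero _ (by simp [hw, (p.adj_snd hnil).ne'])
  rw [Finset.insert_comm] at hU
  refine ⟨L, hp.isAntimagicListing hL ?_ ?_⟩
  · rw [← hU, Finset.coe_insert]
    refine injOn_insert_of_forall_ne hinj fun u hu => ?_
    rw [hsum_snd, ← Int.natAbs_ne_zero]
    exact (Nat.zero_lt_of_lt (hbound u hu).1).ne'
  · rw [← hU, Finset.forall_mem_insert, hsum_snd]
    exact ⟨.inl rfl, fun u hu => .inr (hbound u hu).1⟩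

end IsEulerCircuitOf

theorem IsAntimagicListing.exists_insert_of_even {T : Set G.ConnectedComponent}
    {L : List G.Dart}
    (hL : IsAntimagicListing 0 L (G.connectedComponentMk ⁻¹' T) (Set.Ioo 0 (4 * L.length + 2)))
    {C : G.ConnectedComponent} (hCT : C ∉ T) (hC : Even C.supp.ncard) {a : V} {p : G.Walk a a}
    (hp : IsEulerCircuitOf p C) :
    ∃ M : List G.Dart, IsAntimagicListing 0 M (G.connectedComponentMk ⁻¹' insert C T)
      (Set.Ioo 0 (4 * M.length + 2)) := by
  obtain ⟨M, hM⟩ := hp.exists_isAntimagicListing_of_even hC (0 + L.length)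
  have hdisj : Disjoint (Set.Ioo 0 (4 * L.length + 2))
      (Set.Ioo (4 * (0 + L.length) + 2) (4 * (0 + L.length + M.length) + 2)) := by
    rw [Set.disjoint_left]
    simp only [Set.mem_Ioo]
    omega
  have happend := hL.append hM ((Set.disjoint_singleton_right.2 hCT).preimage _) hdisj
  refine ⟨L ++ M, ?_⟩
  rw [Set.insert_eq, Set.union_comm, Set.preimage_union]
  refine happend.mono fun n hn => ?_
  simp only [Set.mem_union, Set.mem_Ioo, List.length_append] at hn ⊢
  omega

theorem exists_isAntimagicListing_preimage [Finite G.ConnectedComponent]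
    (hG : ∀ C : G.ConnectedComponent, ∃ (a : V) (p : G.Walk a a), IsEulerCircuitOf p C ∧ ¬p.Nil)
    {S : Set G.ConnectedComponent} (hS : {C ∈ S | Odd C.supp.ncard}.Subsingleton) :
    ∃ L : List G.Dart, IsAntimagicListing 0 L (G.connectedComponentMk ⁻¹' S)
      (Set.Ioo 0 (4 * L.length + 2)) := by
  have hbase : ∃ L : List G.Dart,
      IsAntimagicListing 0 L (G.connectedComponentMk ⁻¹' {C ∈ S | Odd C.supp.ncard})
        (Set.Ioo 0 (4 * L.length + 2)) := by
    rcases hS.eq_empty_or_singleton with hO | ⟨C, hO⟩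
    · rw [hO]
      exact ⟨[], by simp, by simp, by simp, by simp⟩
    · obtain ⟨a, p, hp, hnil⟩ := hG C
      rw [hO]
      exact hp.exists_isAntimagicListing_zero_of_odd (hO.ge rfl).2 hnil
  have hinduction := S.toFinite.induction_to
    (C := fun T => {C ∈ S | Odd C.supp.ncard} ⊆ T ∧ ∃ L : List G.Dart,
      IsAntimagicListing 0 L (G.connectedComponentMk ⁻¹' T) (Set.Ioo 0 (4 * L.length + 2)))
    {C ∈ S | Odd C.supp.ncard} (Set.sep_subset _ _) ⟨subset_rfl, hbase⟩ ?_
  · exact hinduction.2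
  · rintro T hTS ⟨hOT, L, hL⟩
    obtain ⟨C, hCS, hCT⟩ := Set.exists_of_ssubset hTS
    obtain ⟨a, p, hp, -⟩ := hG C
    have heven : Even C.supp.ncard := Nat.not_odd_iff_even.1 fun hodd => hCT (hOT ⟨hCS, hodd⟩)
    exact ⟨C, ⟨hCS, hCT⟩, hOT.trans (Set.subset_insert C T),
      hL.exists_insert_of_even hCT heven hp⟩

theorem exists_isAntimagicListing_univ [Finite G.ConnectedComponent]
    (hG : ∀ C : G.ConnectedComponent, ∃ (a : V) (p : G.Walk a a), IsEulerCircuitOf p C ∧ ¬p.Nil)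
    (hodd : {C : G.ConnectedComponent | Odd C.supp.ncard}.ncard ≤ 2) :
    ∃ L : List G.Dart, IsAntimagicListing 0 L Set.univ Set.univ := by
  rcases {C : G.ConnectedComponent | Odd C.supp.ncard}.eq_empty_or_nonempty with
    hempty | ⟨D, hD⟩
  · obtain ⟨L, hL⟩ := exists_isAntimagicListing_preimage hG (S := Set.univ) (by simp [hempty])
    exact ⟨L, hL.mono (Set.subset_univ _)⟩
  · have hsub : {C ∈ ({D}ᶜ : Set G.ConnectedComponent) | Odd C.supp.ncard}.Subsingleton := by
      have heq : {C ∈ ({D}ᶜ : Set G.ConnectedComponent) | Odd C.supp.ncard} =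
          {C | Odd C.supp.ncard} \ {D} := by
        ext C
        exact and_comm
      rw [heq, ← Set.ncard_le_one_iff_subsingleton, Set.ncard_sdiff_singleton_of_mem hD]
      omega
    obtain ⟨L, hL⟩ := exists_isAntimagicListing_preimage hG hsub
    obtain ⟨a, p, hp, hnil⟩ := hG D
    obtain ⟨M, hM⟩ := hp.exists_isAntimagicListing_of_odd hD hnil (0 + L.length)
    have hdisj : Disjoint (Set.Ioo 0 (4 * L.length + 2))
        (insert 0 (Set.Ioi (4 * (0 + L.length) + 2))) := by
      rw [Set.disjoint_left]
      simp only [Set.mem_Ioo, Set.mem_insert_iff, Set.mem_Ioi]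
      omega
    have happend := hL.append hM (disjoint_compl_left.preimage _) hdisj
    refine ⟨L ++ M, ?_⟩
    rw [← Set.preimage_univ (f := G.connectedComponentMk), ← Set.compl_union_self {D}]
    exact happend.mono (Set.subset_univ _)

end AntimagicListing

section Orientation

open SimpleGraph

theorem bijOn_idxOf_add_one {α : Type*} [BEq α] [LawfulBEq α] {l : List α} (hl : l.Nodup) :
    Set.BijOn (fun x => (l.idxOf x + 1 : ℤ)) {x | x ∈ l} (Set.Icc 1 l.length) := by
  refine ⟨fun x hx => ?_, fun x hx y _ hxy => ?_, fun n hn => ?_⟩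
  · have := List.idxOf_lt_length_of_mem hx
    simp only [Set.mem_Icc]
    omega
  · exact (List.idxOf_inj hx).1 (by simpa using hxy)
  · obtain ⟨h₁, h₂⟩ := hn
    have hlt : (n - 1).toNat < l.length := by omega
    refine ⟨l[(n - 1).toNat], List.getElem_mem hlt, ?_⟩
    simp only [hl.idxOf_getElem]
    omega

theorem card_edgeFinset_eq_length {V : Type*} {G : SimpleGraph V} [Fintype G.edgeSet]
    {L : List G.Dart} (hL : (L.map Dart.edge).Nodup)
    (hmem : ∀ v w, s(v, w) ∈ L.map Dart.edge ↔ G.Adj v w) :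
    #G.edgeFinset = L.length := by
  classical
  have hedges : G.edgeFinset = (L.map Dart.edge).toFinset := by
    ext ⟨v, w⟩
    rw [List.mem_toFinset, mem_edgeFinset]
    exact (hmem v w).symm
  rw [hedges, List.toFinset_card_of_nodup hL, List.length_map]

variable {V : Type*} [DecidableEq V]

theorem vertexSum_insert {A : Finset (V × V)} {x : V × V} (hx : x ∉ A) (c : V × V → ℤ) (u : V) :
    vertexSum (insert x A) c u =
      (Pi.single x.2 (c x) - Pi.single x.1 (c x) : V → ℤ) u + vertexSum A c u := by
  simp only [vertexSum, Finset.filter_insert, Pi.sub_apply, Pi.single_apply, eq_comm (a := u)]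
  split_ifs <;> simp [hx] <;> ring

theorem vertexSum_congr {A : Finset (V × V)} {c c' : V × V → ℤ} (h : ∀ x ∈ A, c x = c' x) (u : V) :
    vertexSum A c u = vertexSum A c' u := by
  unfold vertexSum
  rw [Finset.sum_congr rfl fun x hx => h x (Finset.mem_of_mem_filter x hx),
    Finset.sum_congr rfl fun x hx => h x (Finset.mem_of_mem_filter x hx)]

variable {G : SimpleGraph V}

theorem two_mul_vertexSum_add_countP {L : List G.Dart} (hL : (L.map Dart.toProd).Nodup) (s : ℕ)
    (u : V) :
    2 * vertexSum (L.map Dart.toProd).toFinset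
      (fun x => s + ((L.map Dart.toProd).idxOf x + 1 : ℤ)) u +
      (L.map Dart.edge).countP (u ∈ ·) = shiftedSum s L u := by
  induction L generalizing s with
  | nil => simp [shiftedSum, vertexSum]
  | cons e L ih =>
    rw [List.map_cons, List.nodup_cons] at hL
    have hlabel : vertexSum (L.map Dart.toProd).toFinset
        (fun x => s + ((e.toProd :: L.map Dart.toProd).idxOf x + 1 : ℤ)) u =
        vertexSum (L.map Dart.toProd).toFinset
          (fun x => (s + 1 : ℕ) + ((L.map Dart.toProd).idxOf x + 1 : ℤ)) u := by
      refine vertexSum_congr (fun x hx => ?_) u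
      rw [List.idxOf_cons_ne _ (ne_of_mem_of_not_mem (List.mem_toFinset.1 hx) hL.1).symm]
      push_cast
      ring
    have hmem_edge : u ∈ e.edge ↔ u = e.fst ∨ u = e.snd := Sym2.mem_iff
    rw [List.map_cons, List.toFinset_cons, vertexSum_insert (by simpa using hL.1), hlabel,
      List.map_cons, List.countP_cons, shiftedSum, Pi.add_apply, ← ih hL.2 (s + 1)]
    simp only [List.idxOf_cons_self, hmem_edge, Pi.sub_apply, Pi.single_apply, decide_eq_true_eq]
    by_cases hfst : u = e.fst
    · simp only [hfst, e.fst_ne_snd, true_or, ↓reduceIte]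
      push_cast
      ring
    · by_cases hsnd : u = e.snd
      · simp only [hsnd, e.fst_ne_snd.symm, or_true, ↓reduceIte]
        push_cast
        ring
      · simp [hfst, hsnd]

theorem isOrientation_toFinset {L : List G.Dart} (hL : (L.map Dart.edge).Nodup)
    (hmem : ∀ v w, s(v, w) ∈ L.map Dart.edge ↔ G.Adj v w) :
    IsOrientation G (L.map Dart.toProd).toFinset := by
  refine ⟨fun u v => ?_, fun u v ⟨huv, hvu⟩ => ?_⟩
  · rw [← hmem, List.mem_toFinset, List.mem_toFinset]
    simp only [List.mem_map, dart_edge_eq_mk'_iff, and_or_left, exists_or]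
  · obtain ⟨e, he, heuv⟩ := List.mem_map.1 (List.mem_toFinset.1 huv)
    obtain ⟨f, hf, hfvu⟩ := List.mem_map.1 (List.mem_toFinset.1 hvu)
    have hef : e = f := List.inj_on_of_nodup_map hL he hf (by
      rw [dart_edge_eq_mk'_iff.2 (.inl heuv), dart_edge_eq_mk'_iff.2 (.inr hfvu)])
    have huv_eq : u = v := congrArg Prod.fst (heuv.symm.trans (hef ▸ hfvu))
    exact ((hmem u v).1 (List.mem_map.2 ⟨e, he, dart_edge_eq_mk'_iff.2 (.inl heuv)⟩)).ne huv_eq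

theorem IsAntimagicListing.exists_antimagic_orientation [G.LocallyFinite] [Fintype G.edgeSet]
    {L : List G.Dart} {I : Set ℕ} (hL : IsAntimagicListing 0 L Set.univ I) {k : ℕ}
    (hreg : G.IsRegularOfDegree k) :
    ∃ (A : Finset (V × V)) (c : V × V → ℤ), IsOrientation G A ∧
      Set.BijOn c A (Set.Icc 1 (#G.edgeFinset : ℤ)) ∧
      Pairwise fun u v : V => vertexSum A c u ≠ vertexSum A c v := by
  have hmem : ∀ v w, s(v, w) ∈ L.map Dart.edge ↔ G.Adj v w := by simpa using hL.mem_iff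
  have hnodup : (L.map Dart.toProd).Nodup :=
    (List.Nodup.of_map _ hL.nodup).map Dart.toProd_injective
  refine ⟨(L.map Dart.toProd).toFinset, fun x => (L.map Dart.toProd).idxOf x + 1,
    isOrientation_toFinset hL.nodup hmem, ?_, fun u v huv hsum => huv ?_⟩
  · rw [card_edgeFinset_eq_length hL.nodup hmem, ← List.length_map (f := Dart.toProd),
      List.coe_toFinset]
    exact bijOn_idxOf_add_one hnodup
  · have hshifted : ∀ u, shiftedSum 0 L u = 2 * vertexSum (L.map Dart.toProd).toFinset
        (fun x => ((L.map Dart.toProd).idxOf x + 1 : ℤ)) u + k := by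
      intro u
      simpa [countP_mem_eq_degree hL.nodup (hmem u), hreg u] using
        (two_mul_vertexSum_add_countP hnodup 0 u).symm
    exact hL.injOn (Set.mem_univ u) (Set.mem_univ v) (by rw [hshifted, hshifted, hsum])

end Orientation

theorem even_regular_at_most_two_odd_components_antimagic_orientation_general
    {V : Type*} [Fintype V] [DecidableEq V]
    (G : SimpleGraph V) [DecidableRel G.Adj] (d : ℕ) (hd : 0 < d)
    (hreg : ∀ v : V, G.degree v = 2 * d)
    (hodd : {c : G.ConnectedComponent | Odd c.supp.ncard}.ncard ≤ 2) :
    ∃ (A : Finset (V × V)) (c : V × V → ℤ),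
      IsOrientation G A ∧
      Set.BijOn c ↑A (Set.Icc 1 (G.edgeFinset.card : ℤ)) ∧
      Pairwise fun u v : V => vertexSum A c u ≠ vertexSum A c v := by
  have hcircuit : ∀ C : G.ConnectedComponent,
      ∃ (a : V) (p : G.Walk a a), IsEulerCircuitOf p C ∧ ¬p.Nil := by
    intro C
    obtain ⟨a, p, hp⟩ := exists_isEulerCircuitOf (fun v => hreg v ▸ even_two_mul d) C
    exact ⟨a, p, hp, hp.not_nil (hreg a ▸ Nat.mul_pos two_pos hd)⟩
  obtain ⟨L, hL⟩ := exists_isAntimagicListing_univ hcircuit hodd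
  exact hL.exists_antimagic_orientation hreg

/-- For d ≥ 2, every 2d-regular simple graph with at most two odd components
(components with an odd number of vertices) admits an antimagic orientation. -/
theorem even_regular_at_most_two_odd_components_antimagic_orientation
    {V : Type*} [Fintype V] [DecidableEq V]
    (G : SimpleGraph V) [DecidableRel G.Adj] (d : ℕ) (hd : 2 ≤ d)
    (hreg : ∀ v : V, G.degree v = 2 * d)
    (hodd : {c : G.ConnectedComponent | Odd c.supp.ncard}.ncard ≤ 2) :
    ∃ (A : Finset (V × V)) (c : V × V → ℤ),
      IsOrientation G A ∧
      Set.BijOn c ↑A (Set.Icc 1 (G.edgeFinset.card : ℤ)) ∧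
      Pairwise fun u v : V => vertexSum A c u ≠ vertexSum A c v :=
  even_regular_at_most_two_odd_components_antimagic_orientation_general G d (by omega) hreg hodd
end

section
/- Every finite simple graph that is a disjoint union of even cycles (equivalently, every bipartite 2-regular graph) admits an antimagic orientation. -/
open Finset

/-!
Orient every edge of a bipartite graph from one side to the other: each vertex-sum becomes, up to a
sign depending on the side, the sum of the positive labels at the vertex. Hence an antimagic
labeling of the underlying undirected graph makes this orientation antimagic.

In a regular graph, give consecutive intervals of labels to the components. Label sums in a later
component exceed those in an earlier one, while inside a component all label sums are shifted by the
same amount, so it suffices to label each component separately. On a cycle, let the labels run up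
through one parity class and back down through the other; then the sums of consecutive labels are
pairwise distinct.
-/

open SimpleGraph (cycleGraph)

section BlockLabeling

variable {α ι : Type*} [LinearOrder ι]

/-- The number of elements of `E` in the blocks before block `i`, where `κ` sends an element to the
index of its block. Labels on block `i` are shifted by this amount, so that the blocks of `E`
receive consecutive intervals of labels. -/
noncomputable def blockOffset (E : Set α) (κ : α → ι) (i : ι) : ℕ :=
  {x ∈ E | κ x < i}.ncard

variable {E : Set α} {κ : α → ι} {g : α → ℕ}

theorem blockOffset_add_ncard (hE : E.Finite) (i : ι) :
    blockOffset E κ i + {x ∈ E | κ x = i}.ncard = {x ∈ E | κ x ≤ i}.ncard := by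
  have hdisj : Disjoint {x ∈ E | κ x < i} {x ∈ E | κ x = i} :=
    Set.disjoint_left.2 fun _ hlt heq => hlt.2.ne heq.2
  rw [blockOffset, ← Set.ncard_union_eq hdisj (hE.sep _) (hE.sep _)]
  congr 1
  ext x
  simp only [Set.mem_union, Set.mem_sep_iff, le_iff_lt_or_eq, ← and_or_left]

variable (hE : E.Finite)
  (hg : ∀ i, Set.BijOn g {x ∈ E | κ x = i} (Set.Icc 1 {x ∈ E | κ x = i}.ncard))

include hg

theorem blockOffset_lt_blockOffset_add {x : α} (hx : x ∈ E) :
    blockOffset E κ (κ x) < blockOffset E κ (κ x) + g x :=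
  Nat.lt_add_of_pos_right ((hg (κ x)).mapsTo ⟨hx, rfl⟩).1

include hE

theorem blockOffset_add_le_ncard_sep_le {x : α} (hx : x ∈ E) :
    blockOffset E κ (κ x) + g x ≤ {y ∈ E | κ y ≤ κ x}.ncard :=
  blockOffset_add_ncard hE (κ x) ▸ Nat.add_le_add_left ((hg (κ x)).mapsTo ⟨hx, rfl⟩).2 _

theorem blockOffset_add_le_blockOffset {x : α} (hx : x ∈ E) {i : ι} (hi : κ x < i) :
    blockOffset E κ (κ x) + g x ≤ blockOffset E κ i :=
  (blockOffset_add_le_ncard_sep_le hE hg hx).trans <|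
    Set.ncard_le_ncard (fun _ hy => ⟨hy.1, hy.2.trans_lt hi⟩) (hE.sep _)

theorem bijOn_blockOffset_add :
    Set.BijOn (fun x => blockOffset E κ (κ x) + g x) E (Set.Icc 1 E.ncard) := by
  have hmaps : Set.MapsTo (fun x => blockOffset E κ (κ x) + g x) E (Set.Icc 1 E.ncard) :=
    fun x hx => ⟨Nat.one_le_of_lt (blockOffset_lt_blockOffset_add hg hx),
      (blockOffset_add_le_ncard_sep_le hE hg hx).trans
        (Set.ncard_le_ncard (Set.sep_subset _ _) hE)⟩
  have hlt : ∀ x ∈ E, ∀ y ∈ E, κ x < κ y →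
      blockOffset E κ (κ x) + g x < blockOffset E κ (κ y) + g y := fun x hx y hy h =>
    (blockOffset_add_le_blockOffset hE hg hx h).trans_lt (blockOffset_lt_blockOffset_add hg hy)
  have hinj : Set.InjOn (fun x => blockOffset E κ (κ x) + g x) E := by
    intro x hx y hy h
    rcases lt_trichotomy (κ x) (κ y) with hκ | hκ | hκ
    · exact absurd h (hlt x hx y hy hκ).ne
    · simp only [hκ, Nat.add_left_cancel_iff] at h
      exact (hg (κ y)).injOn ⟨hx, hκ⟩ ⟨hy, rfl⟩ h
    · exact absurd h (hlt y hy x hx hκ).ne'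
  refine ⟨hmaps, hinj, (Set.eq_of_subset_of_ncard_le hmaps.image_subset ?_).ge⟩
  rw [hinj.ncard_image, Set.ncard_eq_toFinset_card', Set.toFinset_Icc, Nat.card_Icc,
    Nat.add_sub_cancel]

end BlockLabeling

section Antimagic

variable {V W : Type*}

/-- The sum of the labels of the edges at `v`, for a labeling `f` of the edges of an undirected
graph; labels of non-edges are ignored. -/
noncomputable def labelSum (G : SimpleGraph V) (f : Sym2 V → ℕ) (v : V) : ℕ :=
  ∑ᶠ w ∈ G.neighborSet v, f s(v, w)

/-- An undirected graph is antimagic if its `m` edges can be labeled bijectively by `1, …, m` so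
that the label sums at the vertices are pairwise distinct. -/
def IsAntimagic (G : SimpleGraph V) : Prop :=
  ∃ f : Sym2 V → ℕ, Set.BijOn f G.edgeSet (Set.Icc 1 G.edgeSet.ncard) ∧
    Function.Injective (labelSum G f)

variable {G : SimpleGraph V} {H : SimpleGraph W}

theorem labelSum_congr {f g : Sym2 V → ℕ} {v : V} (h : ∀ w, G.Adj v w → f s(v, w) = g s(v, w)) :
    labelSum G f v = labelSum G g v :=
  finsum_mem_congr rfl h

theorem labelSum_comp_map {φ : V → W} {v : V}
    (hφ : Set.BijOn φ (G.neighborSet v) (H.neighborSet (φ v))) (f : Sym2 W → ℕ) :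
    labelSum G (f ∘ Sym2.map φ) v = labelSum H f (φ v) :=
  finsum_mem_eq_of_bijOn φ hφ fun _ _ => rfl

theorem labelSum_eq_sum [Finite V] (f : Sym2 V → ℕ) (v : V) :
    labelSum G f v = ∑ w ∈ (G.neighborSet v).toFinite.toFinset, f s(v, w) :=
  finsum_mem_eq_finite_toFinset_sum _ _

theorem labelSum_const_add [Finite V] (k : ℕ) (f : Sym2 V → ℕ) (v : V) :
    labelSum G (fun e => k + f e) v = (G.neighborSet v).ncard * k + labelSum G f v := by
  rw [labelSum_eq_sum, labelSum_eq_sum, Finset.sum_add_distrib, Finset.sum_const, smul_eq_mul,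
    ← Set.ncard_eq_toFinset_card]

theorem labelSum_lt_labelSum [Finite V] {f : Sym2 V → ℕ} {u v : V} {k : ℕ}
    (hdeg : (G.neighborSet u).ncard = (G.neighborSet v).ncard)
    (hpos : (G.neighborSet v).ncard ≠ 0) (hu : ∀ w, G.Adj u w → f s(u, w) ≤ k)
    (hv : ∀ w, G.Adj v w → k < f s(v, w)) : labelSum G f u < labelSum G f v := by
  have hne : (G.neighborSet v).toFinite.toFinset.Nonempty := by
    rwa [← Finset.card_ne_zero, ← Set.ncard_eq_toFinset_card]
  calc labelSum G f u
      ≤ (G.neighborSet u).ncard * k := by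
        rw [labelSum_eq_sum, Set.ncard_eq_toFinset_card _ (Set.toFinite _), ← smul_eq_mul]
        exact Finset.sum_le_card_nsmul _ _ _ fun w hw => hu w (by simpa using hw)
    _ = ∑ _w ∈ (G.neighborSet v).toFinite.toFinset, k := by
        rw [hdeg, Finset.sum_const, smul_eq_mul, ← Set.ncard_eq_toFinset_card]
    _ < labelSum G f v := by
        rw [labelSum_eq_sum]
        exact Finset.sum_lt_sum_of_nonempty hne fun w hw => hv w (by simpa using hw)

theorem bijOn_neighborSet_of_iso (φ : G ≃g H) (v : V) :
    Set.BijOn φ (G.neighborSet v) (H.neighborSet (φ v)) :=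
  φ.image_neighborSet ▸ φ.injective.injOn.bijOn_image

theorem bijOn_edgeSet_of_iso (φ : G ≃g H) : Set.BijOn (Sym2.map φ) G.edgeSet H.edgeSet :=
  ⟨fun e he => (φ.mapEdgeSet ⟨e, he⟩).2, (Sym2.map.injective φ.injective).injOn,
    fun e he => ⟨φ.mapEdgeSet.symm ⟨e, he⟩, (φ.mapEdgeSet.symm ⟨e, he⟩).2,
      congrArg Subtype.val (φ.mapEdgeSet.apply_symm_apply ⟨e, he⟩)⟩⟩

theorem IsAntimagic.of_iso (φ : G ≃g H) (hH : IsAntimagic H) : IsAntimagic G := by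
  obtain ⟨f, hf, hsum⟩ := hH
  have hφ := bijOn_edgeSet_of_iso φ
  refine ⟨f ∘ Sym2.map φ, hφ.ncard_eq ▸ hf.comp hφ, ?_⟩
  intro u v huv
  simp only [labelSum_comp_map (bijOn_neighborSet_of_iso φ _)] at huv
  exact φ.injective (hsum huv)

end Antimagic

section Components

variable {V : Type*} {G : SimpleGraph V}

theorem bijOn_val_neighborSet_toSimpleGraph (c : G.ConnectedComponent) (v : c) :
    Set.BijOn (Subtype.val : c → V) (c.toSimpleGraph.neighborSet v) (G.neighborSet v) :=
  ⟨fun _ h => h, Subtype.val_injective.injOn,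
    fun w h => ⟨⟨w, c.mem_supp_of_adj_mem_supp v.2 h⟩, h, rfl⟩⟩

/-- The connected component of `G` containing an edge, read off from an endpoint chosen by
`Quot.out`; the value at a non-edge is irrelevant. -/
noncomputable def edgeComponent (G : SimpleGraph V) (e : Sym2 V) : G.ConnectedComponent :=
  G.connectedComponentMk e.out.1

theorem edgeComponent_mk {u v : V} (h : G.Adj u v) :
    edgeComponent G s(u, v) = G.connectedComponentMk u := by
  rcases Sym2.mem_iff.1 (Sym2.out_fst_mem s(u, v)) with hu | hv
  · rw [edgeComponent, hu]
  · rw [edgeComponent, hv]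
    exact SimpleGraph.ConnectedComponent.sound h.symm.reachable

theorem bijOn_map_val_edgeSet_toSimpleGraph (c : G.ConnectedComponent) :
    Set.BijOn (Sym2.map (Subtype.val : c → V)) c.toSimpleGraph.edgeSet
      {e ∈ G.edgeSet | edgeComponent G e = c} := by
  refine ⟨?_, (Sym2.map.injective Subtype.val_injective).injOn, ?_⟩
  · rintro ⟨u, v⟩ (h : G.Adj u v)
    exact ⟨h, (edgeComponent_mk h).trans u.2⟩
  · rintro ⟨u, v⟩ ⟨h : G.Adj u v, hc⟩
    have hu : u ∈ c.supp := (edgeComponent_mk h).symm.trans hc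
    exact ⟨s(⟨u, hu⟩, ⟨v, c.mem_supp_of_adj_mem_supp hu h⟩), h, rfl⟩

theorem exists_bijOn_of_bijOn_edgeSet_toSimpleGraph (c : G.ConnectedComponent)
    {f : Sym2 c → ℕ}
    (hf : Set.BijOn f c.toSimpleGraph.edgeSet (Set.Icc 1 c.toSimpleGraph.edgeSet.ncard)) :
    ∃ g : Sym2 V → ℕ, g ∘ Sym2.map Subtype.val = f ∧
      Set.BijOn g {e ∈ G.edgeSet | edgeComponent G e = c}
        (Set.Icc 1 {e ∈ G.edgeSet | edgeComponent G e = c}.ncard) := by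
  have hval := bijOn_map_val_edgeSet_toSimpleGraph c
  have hext := Function.extend_comp (Sym2.map.injective Subtype.val_injective) f 0
  refine ⟨Function.extend (Sym2.map Subtype.val) f 0, hext, ?_⟩
  rwa [← hval.image_eq, ← Set.bijOn_comp_iff hval.injOn, hext, hval.image_eq, ← hval.ncard_eq]

theorem isAntimagic_of_forall_connectedComponent [Finite V] {d : ℕ} (hd : d ≠ 0)
    (hdeg : ∀ v, (G.neighborSet v).ncard = d)
    (hG : ∀ c : G.ConnectedComponent, IsAntimagic c.toSimpleGraph) : IsAntimagic G := by
  choose f hf hfsum using hG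
  choose g hgf hg using fun c => exists_bijOn_of_bijOn_edgeSet_toSimpleGraph c (hf c)
  obtain ⟨_, -⟩ := exists_wellFoundedLT G.ConnectedComponent
  have hblock (c) : Set.BijOn (fun e => g (edgeComponent G e) e)
      {e ∈ G.edgeSet | edgeComponent G e = c}
      (Set.Icc 1 {e ∈ G.edgeSet | edgeComponent G e = c}.ncard) :=
    (hg c).congr fun e he => by rw [he.2]
  have hE : G.edgeSet.Finite := Set.toFinite _
  let F (e : Sym2 V) : ℕ := blockOffset G.edgeSet (edgeComponent G) (edgeComponent G e) +
    g (edgeComponent G e) e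
  have hlt (u v) (h : G.connectedComponentMk u < G.connectedComponentMk v) :
      labelSum G F u < labelSum G F v := by
    refine labelSum_lt_labelSum ((hdeg u).trans (hdeg v).symm) (hdeg v ▸ hd)
      (fun w hw => blockOffset_add_le_blockOffset hE hblock hw ((edgeComponent_mk hw).trans_lt h))
      fun w hw => ?_
    rw [← edgeComponent_mk hw]
    exact blockOffset_lt_blockOffset_add hblock hw
  have heq (c : G.ConnectedComponent) (v : c) : labelSum G F v =
      d * blockOffset G.edgeSet (edgeComponent G) c + labelSum c.toSimpleGraph (f c) v := by
    rw [← hgf, labelSum_comp_map (bijOn_val_neighborSet_toSimpleGraph c v), ← hdeg v,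
      ← labelSum_const_add]
    refine labelSum_congr fun w hw => ?_
    simp only [F, edgeComponent_mk hw, show G.connectedComponentMk v = c from v.2]
  refine ⟨F, bijOn_blockOffset_add hE hblock, fun u v huv => ?_⟩
  rcases lt_trichotomy (G.connectedComponentMk u) (G.connectedComponentMk v) with h | h | h
  · exact absurd huv (hlt u v h).ne
  · have hu := heq _ ⟨u, h⟩
    have hv := heq _ ⟨v, rfl⟩
    exact congrArg Subtype.val (hfsum _ (Nat.add_left_cancel (hu.symm.trans (huv.trans hv))))
  · exact absurd huv (hlt v u h).ne'

end Components

section CycleGraph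

variable {V W : Type*}

/-- The label, counted from `0`, of the `i`-th edge of a cycle of length `n`: going around the
cycle, the labels run up through the even numbers and come back down through the odd ones. -/
def zigzag (n i : ℕ) : ℕ :=
  if 2 * i < n then 2 * i else 2 * (n - 1 - i) + 1

theorem bijOn_zigzag (n : ℕ) : Set.BijOn (zigzag n) (Set.Iio n) (Set.Iio n) := by
  have hmaps : Set.MapsTo (zigzag n) (Set.Iio n) (Set.Iio n) := by
    intro i (hi : i < n)
    rw [Set.mem_Iio, zigzag]
    split_ifs <;> omega
  have hinj : Set.InjOn (zigzag n) (Set.Iio n) := by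
    intro i (hi : i < n) j (hj : j < n) h
    unfold zigzag at h
    split_ifs at h <;> omega
  exact ((Set.finite_Iio n).injOn_iff_bijOn_of_mapsTo hmaps).1 hinj

theorem zigzag_add_pred_injective (n : ℕ) :
    Function.Injective fun i : Fin (n + 3) => zigzag (n + 3) ↑(i - 1) + zigzag (n + 3) i := by
  intro i j h
  simp only [Fin.coe_sub_one, ← Fin.val_eq_zero_iff, zigzag] at h
  have hi := i.2
  have hj := j.2
  split_ifs at h <;> omega

theorem fin_one_add_one_ne_zero (n : ℕ) : (1 : Fin (n + 3)) + 1 ≠ 0 :=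
  ne_of_beq_false rfl

theorem cycleGraph_edge_injective (n : ℕ) :
    Function.Injective fun i : Fin (n + 3) => s(i, i + 1) := by
  intro i j h
  rcases Sym2.eq_iff.1 h with ⟨hij, -⟩ | ⟨hij, hji⟩
  · exact hij
  · have htwo : j + (1 + 1) = j := by rw [← add_assoc, ← hij, hji]
    exact absurd (add_eq_left.1 htwo) (fin_one_add_one_ne_zero n)

theorem edgeSet_cycleGraph (n : ℕ) :
    (cycleGraph (n + 2)).edgeSet = Set.range fun i => s(i, i + 1) := by
  ext ⟨i, j⟩
  change (cycleGraph (n + 2)).Adj i j ↔ ∃ k, s(k, k + 1) = s(i, j)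
  rw [SimpleGraph.cycleGraph_adj, sub_eq_iff_eq_add', sub_eq_iff_eq_add']
  constructor
  · rintro (rfl | rfl)
    exacts [⟨j, Sym2.eq_swap⟩, ⟨i, rfl⟩]
  · rintro ⟨k, hk⟩
    rcases Sym2.eq_iff.1 hk with ⟨rfl, rfl⟩ | ⟨rfl, rfl⟩
    exacts [.inr rfl, .inl rfl]

theorem ncard_edgeSet_cycleGraph (n : ℕ) : (cycleGraph (n + 3)).edgeSet.ncard = n + 3 := by
  rw [edgeSet_cycleGraph, ← Set.image_univ,
    Set.ncard_image_of_injective _ (cycleGraph_edge_injective n), Set.ncard_univ, Nat.card_fin]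

theorem labelSum_cycleGraph {n : ℕ} (f : Sym2 (Fin (n + 3)) → ℕ) (i : Fin (n + 3)) :
    labelSum (cycleGraph (n + 3)) f i = f s(i - 1, i - 1 + 1) + f s(i, i + 1) := by
  have hne : i - 1 ≠ i + 1 := by
    rw [ne_eq, sub_eq_iff_eq_add, add_assoc, left_eq_add]
    exact fin_one_add_one_ne_zero n
  rw [labelSum, SimpleGraph.cycleGraph_neighborSet, finsum_mem_pair hne, sub_add_cancel,
    Sym2.eq_swap]

theorem isAntimagic_cycleGraph {n : ℕ} (hn : 3 ≤ n) : IsAntimagic (cycleGraph n) := by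
  obtain ⟨n, rfl⟩ := Nat.exists_eq_add_of_le' hn
  let f : Sym2 (Fin (n + 3)) → ℕ :=
    Function.extend (fun i => s(i, i + 1)) (fun i => zigzag (n + 3) i + 1) 0
  have hf (i) : f s(i, i + 1) = zigzag (n + 3) i + 1 :=
    (cycleGraph_edge_injective n).extend_apply _ _ i
  refine ⟨f, ?_, fun i j hij => ?_⟩
  · rw [ncard_edgeSet_cycleGraph, edgeSet_cycleGraph, ← Set.image_univ,
      ← Set.bijOn_comp_iff (cycleGraph_edge_injective n).injOn]
    have hval : Set.BijOn (Fin.val : Fin (n + 3) → ℕ) Set.univ (Set.Iio (n + 3)) :=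
      ⟨fun i _ => i.2, Fin.val_injective.injOn, fun k hk => ⟨⟨k, hk⟩, trivial, rfl⟩⟩
    have hsucc : Set.BijOn (· + 1) (Set.Iio (n + 3)) (Set.Icc 1 (n + 3)) :=
      ⟨fun k hk => ⟨k.succ_pos, hk⟩, (add_left_injective 1).injOn,
        fun k hk => ⟨k - 1, Nat.sub_one_lt_of_le hk.1 hk.2, Nat.sub_add_cancel hk.1⟩⟩
    exact ((hsucc.comp (bijOn_zigzag _)).comp hval).congr fun i _ => (hf i).symm
  · apply zigzag_add_pred_injective n
    simp only [labelSum_cycleGraph, hf] at hij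
    dsimp only
    omega

theorem exists_isHamiltonianCycle [Finite V] [DecidableEq V] {G : SimpleGraph V}
    (hG : G.Connected) (hdeg : ∀ v, (G.neighborSet v).ncard = 2) :
    ∃ (v : V) (p : G.Walk v v), p.IsHamiltonianCycle := by
  have hcyc : G.IsCycles := fun v _ => hdeg v
  obtain ⟨v⟩ := hG.nonempty
  obtain ⟨p, hp, hverts⟩ := hcyc.exists_cycle_toSubgraph_verts_eq_connectedComponentSupp
    (c := G.connectedComponentMk v) rfl (Set.nonempty_of_ncard_ne_zero (by simp [hdeg]))
  refine ⟨v, p, hp, hp.isPath_tail.isHamiltonian_of_mem fun w => ?_⟩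
  have hw : w ∈ p.support := by
    rw [← p.mem_verts_toSubgraph, hverts]
    exact SimpleGraph.ConnectedComponent.sound (hG.preconnected w v)
  rw [← SimpleGraph.Walk.cons_support_tail hp.not_nil] at hw
  rcases List.mem_cons.1 hw with rfl | hw
  exacts [p.tail.end_mem_support, hw]

theorem adj_of_map_adj [Finite W] {G : SimpleGraph V} {H : SimpleGraph W} {φ : G →g H}
    (hφ : Function.Injective φ) {u v : V}
    (hdeg : (H.neighborSet (φ u)).ncard ≤ (G.neighborSet u).ncard)
    (h : H.Adj (φ u) (φ v)) : G.Adj u v := by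
  have himage : φ '' G.neighborSet u = H.neighborSet (φ u) :=
    Set.eq_of_subset_of_ncard_le (φ.image_neighborSet_subset u)
      ((Set.ncard_image_of_injective _ hφ).symm ▸ hdeg)
  exact hφ.mem_set_image.1 (himage.ge h)

theorem ncard_neighborSet_cycleGraph {n : ℕ} (hn : 3 ≤ n) (i : Fin n) :
    ((cycleGraph n).neighborSet i).ncard = 2 := by
  obtain ⟨n, rfl⟩ := Nat.exists_eq_add_of_le' hn
  rw [Set.ncard_eq_toFinset_card']
  exact SimpleGraph.cycleGraph_degree_three_le

theorem nonempty_iso_cycleGraph [Finite V] {G : SimpleGraph V} (hG : G.Connected)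
    (hdeg : ∀ v, (G.neighborSet v).ncard = 2) :
    3 ≤ Nat.card V ∧ Nonempty (cycleGraph (Nat.card V) ≃g G) := by
  classical
  have := Fintype.ofFinite V
  obtain ⟨v, p, hp⟩ := exists_isHamiltonianCycle hG hdeg
  have hlen : p.length = Nat.card V := hp.length_eq.trans Nat.card_eq_fintype_card.symm
  have hcard : 3 ≤ Nat.card V := hlen ▸ hp.isCycle.three_le_length
  obtain ⟨φ⟩ := (SimpleGraph.cycleGraph_isContained_iff hcard).2 ⟨v, p, hp.isCycle, hlen⟩
  have hφ : Function.Bijective φ.toHom :=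
    (Nat.bijective_iff_injective_and_card _).2 ⟨φ.injective, Nat.card_fin _⟩
  have hadj {i j} (h : G.Adj (φ.toHom i) (φ.toHom j)) : (cycleGraph (Nat.card V)).Adj i j :=
    adj_of_map_adj hφ.injective
      ((hdeg _).trans (ncard_neighborSet_cycleGraph hcard i).symm).le h
  exact ⟨hcard, ⟨⟨.ofBijective φ.toHom hφ, ⟨hadj, φ.toHom.map_adj⟩⟩⟩⟩

theorem nonempty_iso_cycleGraph_toSimpleGraph [Finite V] {G : SimpleGraph V}
    (hdeg : ∀ v, (G.neighborSet v).ncard = 2) (c : G.ConnectedComponent) :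
    3 ≤ c.supp.ncard ∧ Nonempty (cycleGraph c.supp.ncard ≃g c.toSimpleGraph) :=
  nonempty_iso_cycleGraph c.connected_toSimpleGraph fun v =>
    (bijOn_val_neighborSet_toSimpleGraph c v).ncard_eq.trans (hdeg v)

theorem isAntimagic_of_ncard_neighborSet_eq_two [Finite V] {G : SimpleGraph V}
    (hdeg : ∀ v, (G.neighborSet v).ncard = 2) : IsAntimagic G := by
  refine isAntimagic_of_forall_connectedComponent two_ne_zero hdeg fun c => ?_
  obtain ⟨hcard, ⟨φ⟩⟩ := nonempty_iso_cycleGraph_toSimpleGraph hdeg c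
  exact (isAntimagic_cycleGraph hcard).of_iso φ.symm

theorem isBipartite_of_forall_even_ncard_supp [Finite V] {G : SimpleGraph V}
    (hdeg : ∀ v, (G.neighborSet v).ncard = 2)
    (heven : ∀ c : G.ConnectedComponent, Even c.supp.ncard) : G.IsBipartite := by
  refine SimpleGraph.colorable_iff_forall_connectedComponent.2 fun c => ?_
  obtain ⟨-, ⟨φ⟩⟩ := nonempty_iso_cycleGraph_toSimpleGraph hdeg c
  exact .of_hom φ.symm (SimpleGraph.cycleGraph.bicoloring_of_even _ (heven c)).colorable

end CycleGraph

section Orientation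

variable {V : Type*} {G : SimpleGraph V}

/-- The arcs obtained by directing each edge of a bipartite graph towards its endpoint of color
`false`. -/
def arcsFrom [Fintype V] [DecidableRel G.Adj] (C : G.Coloring Bool) : Finset (V × V) :=
  {a | G.Adj a.1 a.2 ∧ C a.1}

variable [Fintype V] [DecidableRel G.Adj] (C : G.Coloring Bool)

theorem mem_arcsFrom {C : G.Coloring Bool} {a : V × V} :
    a ∈ arcsFrom C ↔ G.Adj a.1 a.2 ∧ C a.1 := by
  simp only [arcsFrom, Finset.mem_filter_univ]

theorem isOrientation_arcsFrom : IsOrientation G (arcsFrom C) := by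
  simp only [IsOrientation, mem_arcsFrom]
  refine ⟨fun u v => ⟨fun h => ?_, ?_⟩, ?_⟩
  · grind [C.valid h, h.symm]
  · rintro (h | h)
    exacts [h.1, h.1.symm]
  · rintro u v ⟨hu, hv⟩
    exact C.valid hu.1 (hu.2.trans hv.2.symm)

theorem bijOn_edgeSet_arcsFrom :
    Set.BijOn (fun a : V × V => s(a.1, a.2)) (arcsFrom C) G.edgeSet := by
  refine ⟨fun a ha => (mem_arcsFrom.1 ha).1, ?_, ?_⟩
  · rintro ⟨u, v⟩ ha ⟨x, y⟩ hb h
    rcases Sym2.eq_iff.1 h with ⟨rfl, rfl⟩ | ⟨rfl, rfl⟩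
    · rfl
    · exact absurd ⟨ha, hb⟩ ((isOrientation_arcsFrom C).2 u v)
  · rintro ⟨u, v⟩ (h : G.Adj u v)
    rcases ((isOrientation_arcsFrom C).1 u v).1 h with huv | hvu
    · exact ⟨(u, v), huv, rfl⟩
    · exact ⟨(v, u), hvu, Sym2.eq_swap⟩

variable [DecidableEq V] (f : Sym2 V → ℕ) (v : V)

theorem sum_arcsFrom_filter_fst :
    ∑ a ∈ (arcsFrom C).filter (fun a => a.1 = v), (f s(a.1, a.2) : ℤ) =
      if C v then (labelSum G f v : ℤ) else 0 := by
  split_ifs with hv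
  · rw [labelSum_eq_sum, Nat.cast_sum]
    refine (Finset.sum_nbij (v, ·) (fun w hw => ?_) (Prod.mk_right_injective v).injOn ?_
      fun _ _ => rfl).symm
    · exact Finset.mem_filter.2 ⟨mem_arcsFrom.2 ⟨(Set.Finite.mem_toFinset _).1 hw, hv⟩, rfl⟩
    · rintro ⟨_, w⟩ ha
      obtain ⟨harc, rfl⟩ := Finset.mem_filter.1 ha
      exact ⟨w, (Set.Finite.mem_toFinset _).2 (mem_arcsFrom.1 harc).1, rfl⟩
  · refine Finset.sum_eq_zero fun a ha => ?_
    obtain ⟨harc, rfl⟩ := Finset.mem_filter.1 ha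
    exact absurd (mem_arcsFrom.1 harc).2 hv

theorem sum_arcsFrom_filter_snd :
    ∑ a ∈ (arcsFrom C).filter (fun a => a.2 = v), (f s(a.1, a.2) : ℤ) =
      if C v then 0 else (labelSum G f v : ℤ) := by
  split_ifs with hv
  · refine Finset.sum_eq_zero fun a ha => ?_
    obtain ⟨harc, rfl⟩ := Finset.mem_filter.1 ha
    obtain ⟨hadj, hc⟩ := mem_arcsFrom.1 harc
    exact absurd (hc.trans hv.symm) (C.valid hadj)
  · rw [labelSum_eq_sum, Nat.cast_sum]
    refine (Finset.sum_nbij (·, v) (fun w hw => ?_) (Prod.mk_left_injective v).injOn ?_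
      fun w _ => by rw [Sym2.eq_swap]).symm
    · have hadj : G.Adj v w := (Set.Finite.mem_toFinset _).1 hw
      have hw : C w := by grind [C.valid hadj]
      exact Finset.mem_filter.2 ⟨mem_arcsFrom.2 ⟨hadj.symm, hw⟩, rfl⟩
    · rintro ⟨w, _⟩ ha
      obtain ⟨harc, rfl⟩ := Finset.mem_filter.1 ha
      exact ⟨w, (Set.Finite.mem_toFinset _).2 (mem_arcsFrom.1 harc).1.symm, rfl⟩

theorem vertexSum_arcsFrom :
    vertexSum (arcsFrom C) (fun a => (f s(a.1, a.2) : ℤ)) v =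
      if C v then -(labelSum G f v : ℤ) else labelSum G f v := by
  rw [vertexSum, sum_arcsFrom_filter_fst, sum_arcsFrom_filter_snd]
  split_ifs <;> ring

end Orientation

theorem IsAntimagic.exists_orientation {V : Type*} [Finite V] [DecidableEq V]
    {G : SimpleGraph V} (hG : IsAntimagic G) (h2 : G.IsBipartite) :
    ∃ (A : Finset (V × V)) (c : V × V → ℤ),
      IsOrientation G A ∧
      Set.BijOn c ↑A (Set.Icc 1 (G.edgeSet.ncard : ℤ)) ∧
      Pairwise fun u v : V => vertexSum A c u ≠ vertexSum A c v := by
  classical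
  have := Fintype.ofFinite V
  obtain ⟨f, hf, hsum⟩ := hG
  let C : G.Coloring Bool := h2.toColoring (by simp)
  have hcast : Set.BijOn (Nat.cast : ℕ → ℤ) (Set.Icc 1 G.edgeSet.ncard)
      (Set.Icc 1 (G.edgeSet.ncard : ℤ)) := by
    have himage := (Nat.cast_injective (R := ℤ)).injOn.bijOn_image (s := Set.Icc 1 G.edgeSet.ncard)
    rwa [Nat.image_cast_int_Icc, Nat.cast_one] at himage
  refine ⟨arcsFrom C, fun a => f s(a.1, a.2), isOrientation_arcsFrom C,
    hcast.comp (hf.comp (bijOn_edgeSet_arcsFrom C)), fun u v huv h => huv (hsum ?_)⟩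
  simp only [vertexSum_arcsFrom] at h
  split_ifs at h <;> omega

/-- Every disjoint union of even cycles (i.e. every 2-regular graph all of whose connected
components have an even number of vertices) admits an antimagic orientation. -/
theorem disjoint_union_even_cycles_admits_antimagic_orientation
    {V : Type*} [Fintype V] [DecidableEq V]
    (G : SimpleGraph V) [DecidableRel G.Adj]
    (hreg : ∀ v : V, G.degree v = 2)
    (heven : ∀ c : G.ConnectedComponent, Even c.supp.ncard) :
    ∃ (A : Finset (V × V)) (c : V × V → ℤ),
      IsOrientation G A ∧
      Set.BijOn c ↑A (Set.Icc 1 (G.edgeFinset.card : ℤ)) ∧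
      Pairwise fun u v : V => vertexSum A c u ≠ vertexSum A c v := by
  have hdeg (v : V) : (G.neighborSet v).ncard = 2 := by
    rw [Set.ncard_eq_toFinset_card']
    exact hreg v
  have hcard : G.edgeFinset.card = G.edgeSet.ncard := (Set.ncard_eq_toFinset_card' _).symm
  rw [hcard]
  exact (isAntimagic_of_ncard_neighborSet_eq_two hdeg).exists_orientation
    (isBipartite_of_forall_even_ncard_supp hdeg heven)
end
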